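/- Let u be C^∞ and 𝒰 ⊆ ℝ² a bounded open set. There exists a constant C > 0 (depending on u and 𝒰) such that for every K > 0 there exists a constant C_K > 0 with the following property: for all v ∈ C₀^∞(𝒰), Σ_{|I| ≤ 2} ‖X^I v‖_{H²} + K · Σ_{|I| ≤ 1} ‖X^I v‖_{H²} ≤ C ‖P_u v‖_{H²} + C_K ‖v‖_{L²}, where the sums range over all words I of length at most 2 (respectively at most 1) in the letters {1,2,3} and X^I denotes the corresponding composition X^{I₁}X^{I₂}⋯X^{I_{|I|}} of the vector fields (the empty word giving the identity). -/

import Mathlib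

open MeasureTheory

/-- Partial derivative in the first (x) coordinate. -/
noncomputable def pdx (f : ℝ × ℝ → ℝ) : ℝ × ℝ → ℝ :=
  fun p => deriv (fun x => f (x, p.2)) p.1

/-- Partial derivative in the second (t) coordinate. -/
noncomputable def pdt (f : ℝ × ℝ → ℝ) : ℝ × ℝ → ℝ :=
  fun p => deriv (fun t => f (p.1, t)) p.2

/-- The mixed partial derivative ∂ₓ^{α₁} ∂ₜ^{α₂}. -/
noncomputable def pderiv2 (α : ℕ × ℕ) (f : ℝ × ℝ → ℝ) : ℝ × ℝ → ℝ :=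
  pdx^[α.1] (pdt^[α.2] f)

/-- The set of multi-indices of order at most `s`. -/
def multiIdx (s : ℕ) : Finset (ℕ × ℕ) :=
  (Finset.range (s + 1) ×ˢ Finset.range (s + 1)).filter fun α => α.1 + α.2 ≤ s

/-- Squared L² norm on ℝ². -/
noncomputable def L2normSq (f : ℝ × ℝ → ℝ) : ℝ := ∫ p : ℝ × ℝ, (f p) ^ 2

/-- The Sobolev H^s norm: (Σ_{|α|≤s} ‖∂^α v‖²_{L²})^{1/2}. -/
noncomputable def sobolevNorm (s : ℕ) (f : ℝ × ℝ → ℝ) : ℝ :=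
  Real.sqrt (∑ α ∈ multiIdx s, L2normSq (pderiv2 α f))

/-- The Sobolev H^s inner product: Σ_{|α|≤s} (∂^α v, ∂^α w)_{L²}. -/
noncomputable def sobolevInner (s : ℕ) (f g : ℝ × ℝ → ℝ) : ℝ :=
  ∑ α ∈ multiIdx s, ∫ p : ℝ × ℝ, pderiv2 α f p * pderiv2 α g p

/-- The vector fields X₁ = ∂ₓ, X₂ = xʳ∂ₜ, X₃ = xʳ h̃(x,t,u(x,t)) ∂ₜ. -/
noncomputable def Xvf (r : ℕ) (h : ℝ × ℝ × ℝ → ℝ) (u : ℝ × ℝ → ℝ) :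
    Fin 3 → (ℝ × ℝ → ℝ) → (ℝ × ℝ → ℝ)
  | 0 => fun v => pdx v
  | 1 => fun v => fun p => p.1 ^ r * pdt v p
  | 2 => fun v => fun p => p.1 ^ r * h (p.1, p.2, u p) * pdt v p

/-- The operator P_u v = X₁²v + X₂²v + X₃²v. -/
noncomputable def Pop (r : ℕ) (h : ℝ × ℝ × ℝ → ℝ) (u : ℝ × ℝ → ℝ)
    (v : ℝ × ℝ → ℝ) : ℝ × ℝ → ℝ :=
  fun p => Xvf r h u 0 (Xvf r h u 0 v) p + Xvf r h u 1 (Xvf r h u 1 v) p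
    + Xvf r h u 2 (Xvf r h u 2 v) p


/-! ### Basic calculus -/

abbrev Sm (f : ℝ × ℝ → ℝ) : Prop := ContDiff ℝ (⊤ : ℕ∞) f

structure CS (f : ℝ × ℝ → ℝ) : Prop where
  sm : Sm f
  cs : HasCompactSupport f

theorem Sm.diff {f : ℝ × ℝ → ℝ} (hf : Sm f) : Differentiable ℝ f :=
  hf.differentiable (by simp)

theorem Sm.hasDerivAt_x {f : ℝ × ℝ → ℝ} (hf : Sm f) (p : ℝ × ℝ) :
    HasDerivAt (fun x => f (x, p.2)) (fderiv ℝ f p (1, 0)) p.1 := by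
  have h1 : HasFDerivAt f (fderiv ℝ f p) (p.1, p.2) := (hf.diff p).hasFDerivAt
  have h2 : HasDerivAt (fun x : ℝ => (x, p.2)) ((1 : ℝ), (0 : ℝ)) p.1 :=
    (hasDerivAt_id p.1).prodMk (hasDerivAt_const p.1 p.2)
  exact h1.comp_hasDerivAt p.1 h2

theorem Sm.hasDerivAt_t {f : ℝ × ℝ → ℝ} (hf : Sm f) (p : ℝ × ℝ) :
    HasDerivAt (fun t => f (p.1, t)) (fderiv ℝ f p (0, 1)) p.2 := by
  have h1 : HasFDerivAt f (fderiv ℝ f p) (p.1, p.2) := (hf.diff p).hasFDerivAt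
  have h2 : HasDerivAt (fun t : ℝ => (p.1, t)) ((0 : ℝ), (1 : ℝ)) p.2 :=
    (hasDerivAt_const p.2 p.1).prodMk (hasDerivAt_id p.2)
  exact h1.comp_hasDerivAt p.2 h2

theorem pdx_eq {f : ℝ × ℝ → ℝ} (hf : Sm f) : pdx f = fun p => fderiv ℝ f p (1, 0) := by
  funext p; exact (hf.hasDerivAt_x p).deriv

theorem pdt_eq {f : ℝ × ℝ → ℝ} (hf : Sm f) : pdt f = fun p => fderiv ℝ f p (0, 1) := by
  funext p; exact (hf.hasDerivAt_t p).deriv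

theorem Sm.hasx {f : ℝ × ℝ → ℝ} (hf : Sm f) (p : ℝ × ℝ) :
    HasDerivAt (fun x => f (x, p.2)) (pdx f p) p.1 := by
  rw [pdx_eq hf]; exact hf.hasDerivAt_x p

theorem Sm.hast {f : ℝ × ℝ → ℝ} (hf : Sm f) (p : ℝ × ℝ) :
    HasDerivAt (fun t => f (p.1, t)) (pdt f p) p.2 := by
  rw [pdt_eq hf]; exact hf.hasDerivAt_t p

theorem Sm.dx {f : ℝ × ℝ → ℝ} (hf : Sm f) : Sm (pdx f) := by
  rw [pdx_eq hf]
  exact (hf.fderiv_right (m := ((⊤ : ℕ∞) : WithTop ℕ∞)) (by simp)).clm_apply contDiff_const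

theorem Sm.dt {f : ℝ × ℝ → ℝ} (hf : Sm f) : Sm (pdt f) := by
  rw [pdt_eq hf]
  exact (hf.fderiv_right (m := ((⊤ : ℕ∞) : WithTop ℕ∞)) (by simp)).clm_apply contDiff_const

theorem Sm.mul {f g : ℝ × ℝ → ℝ} (hf : Sm f) (hg : Sm g) : Sm (fun p => f p * g p) :=
  ContDiff.mul hf hg

theorem Sm.add {f g : ℝ × ℝ → ℝ} (hf : Sm f) (hg : Sm g) : Sm (fun p => f p + g p) :=
  ContDiff.add hf hg

theorem Sm.cst (c : ℝ) : Sm (fun _ => c) := contDiff_const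

theorem pdt_pdx {f : ℝ × ℝ → ℝ} (hf : Sm f) : pdt (pdx f) = pdx (pdt f) := by
  have hd : Differentiable ℝ (fderiv ℝ f) :=
    (hf.fderiv_right (m := ((⊤ : ℕ∞) : WithTop ℕ∞)) (by simp)).differentiable (by simp)
  rw [pdt_eq hf.dx, pdx_eq hf.dt, pdt_eq hf, pdx_eq hf]
  funext p
  have h1 : ∀ a : ℝ × ℝ, HasFDerivAt (fun q => fderiv ℝ f q a)
      ((fderiv ℝ (fderiv ℝ f) p).flip a) p := by
    intro a
    have := (hd p).hasFDerivAt.clm_apply (hasFDerivAt_const a p)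
    simpa using this
  have hs : IsSymmSndFDerivAt ℝ f p :=
    (ContDiff.contDiffAt hf).isSymmSndFDerivAt (by
      simp only [minSmoothness_of_isRCLikeNormedField]
      exact WithTop.coe_le_coe.2 (le_top : (2 : ℕ∞) ≤ ⊤))
  show (fderiv ℝ (fun q => fderiv ℝ f q (1, 0)) p) (0, 1)
    = (fderiv ℝ (fun q => fderiv ℝ f q (0, 1)) p) (1, 0)
  rw [(h1 _).fderiv, (h1 _).fderiv]
  exact hs _ _

theorem pdx_mul {f g : ℝ × ℝ → ℝ} (hf : Sm f) (hg : Sm g) :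
    pdx (fun p => f p * g p) = fun p => pdx f p * g p + f p * pdx g p := by
  funext p; exact ((hf.hasx p).mul (hg.hasx p)).deriv

theorem pdt_mul {f g : ℝ × ℝ → ℝ} (hf : Sm f) (hg : Sm g) :
    pdt (fun p => f p * g p) = fun p => pdt f p * g p + f p * pdt g p := by
  funext p; exact ((hf.hast p).mul (hg.hast p)).deriv

theorem pdx_add {f g : ℝ × ℝ → ℝ} (hf : Sm f) (hg : Sm g) :
    pdx (fun p => f p + g p) = fun p => pdx f p + pdx g p := by
  funext p; exact ((hf.hasx p).add (hg.hasx p)).deriv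

theorem pdt_add {f g : ℝ × ℝ → ℝ} (hf : Sm f) (hg : Sm g) :
    pdt (fun p => f p + g p) = fun p => pdt f p + pdt g p := by
  funext p; exact ((hf.hast p).add (hg.hast p)).deriv

theorem tsupport_pdx {f : ℝ × ℝ → ℝ} (hf : Sm f) : tsupport (pdx f) ⊆ tsupport f := by
  rw [pdx_eq hf]; exact tsupport_fderiv_apply_subset ℝ _

theorem tsupport_pdt {f : ℝ × ℝ → ℝ} (hf : Sm f) : tsupport (pdt f) ⊆ tsupport f := by
  rw [pdt_eq hf]; exact tsupport_fderiv_apply_subset ℝ _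

theorem CS.dx {f : ℝ × ℝ → ℝ} (hf : CS f) : CS (pdx f) :=
  ⟨hf.sm.dx, hf.cs.mono' ((subset_tsupport _).trans (tsupport_pdx hf.sm))⟩

theorem CS.dt {f : ℝ × ℝ → ℝ} (hf : CS f) : CS (pdt f) :=
  ⟨hf.sm.dt, hf.cs.mono' ((subset_tsupport _).trans (tsupport_pdt hf.sm))⟩

theorem CS.mul_left {f g : ℝ × ℝ → ℝ} (hf : Sm f) (hg : CS g) : CS (fun p => f p * g p) :=
  ⟨hf.mul hg.sm, hg.cs.mul_left⟩

theorem CS.mul {f g : ℝ × ℝ → ℝ} (hf : CS f) (hg : CS g) : CS (fun p => f p * g p) :=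
  CS.mul_left hf.sm hg

theorem CS.add {f g : ℝ × ℝ → ℝ} (hf : CS f) (hg : CS g) : CS (fun p => f p + g p) :=
  ⟨hf.sm.add hg.sm, HasCompactSupport.add hf.cs hg.cs⟩

theorem CS.int {f : ℝ × ℝ → ℝ} (hf : CS f) : Integrable f :=
  hf.sm.continuous.integrable_of_hasCompactSupport hf.cs

theorem CS.idx {f : ℝ × ℝ → ℝ} (hf : CS f) : ∫ p, pdx f p = 0 := by
  have h2 := hf.dx.int
  rw [pdx_eq hf.sm] at h2 ⊢
  have := integral_smul_fderiv_eq_neg_fderiv_smul_of_integrable (μ := (volume : Measure (ℝ × ℝ)))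
    (𝕜 := ℝ) (f := fun _ : ℝ × ℝ => (1 : ℝ)) (g := f) (v := ((1 : ℝ), (0 : ℝ)))
    (by simp) (by simpa using h2) (by simpa using hf.int) (fun x _ => differentiableAt_const _)
    (fun x _ => hf.sm.diff x)
  simpa using this

theorem CS.idt {f : ℝ × ℝ → ℝ} (hf : CS f) : ∫ p, pdt f p = 0 := by
  have h2 := hf.dt.int
  rw [pdt_eq hf.sm] at h2 ⊢
  have := integral_smul_fderiv_eq_neg_fderiv_smul_of_integrable (μ := (volume : Measure (ℝ × ℝ)))
    (𝕜 := ℝ) (f := fun _ : ℝ × ℝ => (1 : ℝ)) (g := f) (v := ((0 : ℝ), (1 : ℝ)))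
    (by simp) (by simpa using h2) (by simpa using hf.int) (fun x _ => differentiableAt_const _)
    (fun x _ => hf.sm.diff x)
  simpa using this

theorem ibp_x {f g : ℝ × ℝ → ℝ} (hf : Sm f) (hg : CS g) :
    ∫ p, f p * pdx g p = - ∫ p, pdx f p * g p := by
  have h := (CS.mul_left hf hg).idx
  rw [pdx_mul hf hg.sm, integral_add (CS.mul_left hf.dx hg).int (CS.mul_left hf hg.dx).int] at h
  linarith

theorem ibp_t {f g : ℝ × ℝ → ℝ} (hf : Sm f) (hg : CS g) :
    ∫ p, f p * pdt g p = - ∫ p, pdt f p * g p := by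
  have h := (CS.mul_left hf hg).idt
  rw [pdt_mul hf hg.sm, integral_add (CS.mul_left hf.dt hg).int (CS.mul_left hf hg.dt).int] at h
  linarith

/-! ### The L² norm -/

noncomputable def Nm (f : ℝ × ℝ → ℝ) : ℝ := Real.sqrt (L2normSq f)

theorem Nm_nonneg (f : ℝ × ℝ → ℝ) : 0 ≤ Nm f := Real.sqrt_nonneg _

theorem Nm_sq (f : ℝ × ℝ → ℝ) : Nm f ^ 2 = ∫ p, f p ^ 2 :=
  Real.sq_sqrt (integral_nonneg fun _ => sq_nonneg _)

theorem CS.sqint {f : ℝ × ℝ → ℝ} (hf : CS f) : Integrable (fun p => f p ^ 2) := by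
  simpa [sq] using (hf.mul hf).int

theorem integral_add3 {α : Type*} [MeasurableSpace α] {μ : Measure α} {a b c : α → ℝ}
    (ha : Integrable a μ) (hb : Integrable b μ) (hc : Integrable c μ) :
    ∫ p, (a p + (b p + c p)) ∂μ = ∫ p, a p ∂μ + (∫ p, b p ∂μ + ∫ p, c p ∂μ) := by
  rw [← integral_add hb hc]
  exact integral_add ha (hb.add hc)

theorem CS.cauchy {f g : ℝ × ℝ → ℝ} (hf : CS f) (hg : CS g) :
    |∫ p, f p * g p| ≤ Nm f * Nm g := by
  have key : ∀ s : ℝ, 0 ≤ Nm f ^ 2 * (s * s) + (2 * ∫ p, f p * g p) * s + Nm g ^ 2 := by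
    intro s
    have h0 : 0 ≤ ∫ p, (s * f p + g p) ^ 2 := integral_nonneg fun _ => sq_nonneg _
    have e : (fun p => (s * f p + g p) ^ 2)
        = fun p => (s * s) * f p ^ 2 + ((2 * s) * (f p * g p) + g p ^ 2) := by
      funext p; ring
    rw [e, integral_add3 (hf.sqint.const_mul _) ((hf.mul hg).int.const_mul _) hg.sqint,
      integral_const_mul,
      integral_const_mul, ← Nm_sq, ← Nm_sq] at h0
    linarith
  have hd := discrim_le_zero key
  unfold discrim at hd
  apply abs_le_of_sq_le_sq _ (mul_nonneg (Nm_nonneg _) (Nm_nonneg _))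
  nlinarith

theorem CS.tri {f g : ℝ × ℝ → ℝ} (hf : CS f) (hg : CS g) :
    Nm (fun p => f p + g p) ≤ Nm f + Nm g := by
  apply le_of_sq_le_sq _ (add_nonneg (Nm_nonneg _) (Nm_nonneg _))
  have e : (fun p => (f p + g p) ^ 2)
        = fun p => f p ^ 2 + (2 * (f p * g p) + g p ^ 2) := by
      funext p; ring
  rw [Nm_sq, e, integral_add3 hf.sqint ((hf.mul hg).int.const_mul _) hg.sqint, integral_const_mul, ← Nm_sq, ← Nm_sq]
  have := (le_abs_self _).trans (hf.cauchy hg)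
  nlinarith

theorem Nm_le_of_abs {f g : ℝ × ℝ → ℝ} (hf : CS f) (hg : CS g) {c : ℝ} (hc : 0 ≤ c)
    (h : ∀ p, |f p| ≤ c * |g p|) : Nm f ≤ c * Nm g := by
  apply le_of_sq_le_sq _ (mul_nonneg hc (Nm_nonneg _))
  rw [mul_pow, Nm_sq, Nm_sq, ← integral_const_mul]
  apply integral_mono hf.sqint (hg.sqint.const_mul _)
  intro p
  have := pow_le_pow_left₀ (abs_nonneg _) (h p) 2
  simpa [mul_pow] using this

theorem Nm_const_mul (c : ℝ) (f : ℝ × ℝ → ℝ) : Nm (fun p => c * f p) = |c| * Nm f := by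
  unfold Nm L2normSq
  simp only [mul_pow, integral_const_mul]
  rw [Real.sqrt_mul (sq_nonneg _), Real.sqrt_sq_eq_abs]

/-! ### Test functions on a set -/

structure TF (U : Set (ℝ × ℝ)) (f : ℝ × ℝ → ℝ) : Prop extends CS f where
  sub : tsupport f ⊆ U

theorem TF.dx {U} {f : ℝ × ℝ → ℝ} (hf : TF U f) : TF U (pdx f) :=
  ⟨hf.toCS.dx, (tsupport_pdx hf.sm).trans hf.sub⟩

theorem TF.dt {U} {f : ℝ × ℝ → ℝ} (hf : TF U f) : TF U (pdt f) :=
  ⟨hf.toCS.dt, (tsupport_pdt hf.sm).trans hf.sub⟩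

theorem TF.mul_left {U} {c f : ℝ × ℝ → ℝ} (hc : Sm c) (hf : TF U f) : TF U (fun p => c p * f p) :=
  ⟨CS.mul_left hc hf.toCS, (tsupport_mul_subset_right (f := c) (g := f)).trans hf.sub⟩

theorem TF.add {U} {f g : ℝ × ℝ → ℝ} (hf : TF U f) (hg : TF U g) : TF U (fun p => f p + g p) :=
  ⟨hf.toCS.add hg.toCS, (tsupport_add f g).trans (Set.union_subset hf.sub hg.sub)⟩

theorem TF.zero {U} {f : ℝ × ℝ → ℝ} (hf : TF U f) {p} (hp : p ∉ U) : f p = 0 :=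
  image_eq_zero_of_notMem_tsupport fun h => hp (hf.sub h)

/-- smooth coefficients are bounded on bounded sets -/
theorem coef_bound {U : Set (ℝ × ℝ)} (hU : Bornology.IsBounded U) {c : ℝ × ℝ → ℝ} (hc : Sm c) :
    ∃ M : ℝ, 0 ≤ M ∧ ∀ f, TF U f → Nm (fun p => c p * f p) ≤ M * Nm f := by
  obtain ⟨M, hM⟩ := hU.isCompact_closure.exists_bound_of_continuousOn hc.continuous.continuousOn
  refine ⟨max M 0, le_max_right _ _, fun f hf => ?_⟩
  apply Nm_le_of_abs (CS.mul_left hc hf.toCS) hf.toCS (le_max_right _ _)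
  intro p
  by_cases hp : p ∈ U
  · rw [abs_mul]
    have := hM p (subset_closure hp)
    rw [Real.norm_eq_abs] at this
    exact mul_le_mul_of_nonneg_right (this.trans (le_max_left _ _)) (abs_nonneg _)
  · simp [hf.zero hp]

/-! ### The one-dimensional estimate -/

set_option maxHeartbeats 1000000 in
theorem onedim_pointwise (m : ℕ) (σ ρ k x f f1 F : ℝ) (hρ : 0 < ρ) (hk1 : 1 ≤ k)
    (hσ : σ ^ 2 * ρ ^ (2 * m + 4) = 1) :
    k * (σ ^ 2 * x ^ (2 * m) * f ^ 2) ≤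
      (1 / 2 + 2 * k * (4 * k) ^ m * 4 ^ (m + 1)) * F ^ 2
      + (σ ^ 2 * (x ^ (2 * m + 2) * f1 ^ 2 + x ^ (2 * m + 2) * (f * F)
          + σ ^ 2 * x ^ (4 * m + 4) * f ^ 2 - k * (x ^ (2 * m) * f ^ 2))
        + 2 * k * (4 * k) ^ m * ρ⁻¹ ^ 4 * (4 * (f ^ 2 + 2 * x * f * f1)
          + 2 * (2 ^ (m + 1) * ρ ^ 2) * (f1 ^ 2 + f * F + σ ^ 2 * x ^ (2 * m + 2) * f ^ 2))) := by
  obtain ⟨y, rfl⟩ : ∃ y, x = ρ * y := ⟨x / ρ, by field_simp⟩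
  set A : ℝ := 2 ^ (m + 1) * ρ ^ 2 with hA
  have hApos : 0 < A := by positivity
  set a := f ^ 2 with ha
  have ha0 : 0 ≤ a := sq_nonneg _
  set b := σ ^ 2 * (ρ * y) ^ (2 * m + 2) * f ^ 2 with hb
  set g := σ ^ 2 * (ρ * y) ^ (2 * m) * f ^ 2 with hg
  set hh := σ ^ 2 * (σ ^ 2 * (ρ * y) ^ (4 * m + 4) * f ^ 2) with hhh
  have eb : ρ ^ 2 * b = y ^ (2 * m + 2) * a := by
    calc ρ ^ 2 * b = (σ ^ 2 * ρ ^ (2 * m + 4)) * (y ^ (2 * m + 2) * a) := by rw [hb, ha]; ring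
      _ = _ := by rw [hσ, one_mul]
  have eg : g = ρ⁻¹ ^ 4 * (y ^ (2 * m) * a) := by
    have : ρ ^ 4 * g = y ^ (2 * m) * a := by
      calc ρ ^ 4 * g = (σ ^ 2 * ρ ^ (2 * m + 4)) * (y ^ (2 * m) * a) := by rw [hg, ha]; ring
        _ = _ := by rw [hσ, one_mul]
    rw [← this]; field_simp
  have eh : hh = ρ⁻¹ ^ 4 * (y ^ (4 * m + 4) * a) := by
    have : ρ ^ 4 * hh = y ^ (4 * m + 4) * a := by
      calc ρ ^ 4 * hh = (σ ^ 2 * ρ ^ (2 * m + 4)) ^ 2 * (y ^ (4 * m + 4) * a) := by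
            rw [hhh, ha]; ring
        _ = _ := by rw [hσ, one_pow, one_mul]
    rw [← this]; field_simp
  have y1 : y ^ 2 ≤ 1 / 2 + 2 ^ m * y ^ (2 * m + 2) := by
    have e : (2 : ℝ) ^ m * y ^ (2 * m + 2) = (2 * y ^ 2) ^ m * y ^ 2 := by
      rw [mul_pow, ← pow_mul]; ring
    rw [e]
    by_cases hy : y ^ 2 ≤ 1 / 2
    · have : 0 ≤ (2 * y ^ 2) ^ m * y ^ 2 := by positivity
      linarith
    · have : 1 ≤ (2 * y ^ 2) ^ m := one_le_pow₀ (by linarith)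
      nlinarith [sq_nonneg y]
  have y2 : k * y ^ (2 * m) ≤ 1 / 4 * y ^ (4 * m + 4) + k * (4 * k) ^ m := by
    have e1 : y ^ (2 * m) = (y ^ 2) ^ m := by rw [pow_mul]
    have e2 : y ^ (4 * m + 4) = (y ^ 2) ^ m * (y ^ 2) ^ (m + 2) := by
      rw [← pow_add, ← pow_mul]; ring_nf
    rw [e1, e2]
    by_cases hy : y ^ 2 ≤ 4 * k
    · have h1 : (y ^ 2) ^ m ≤ (4 * k) ^ m := pow_le_pow_left₀ (sq_nonneg _) hy m
      have h2 : 0 ≤ (y ^ 2) ^ m * (y ^ 2) ^ (m + 2) := by positivity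
      nlinarith
    · push Not at hy
      have h1 : y ^ 2 ≤ (y ^ 2) ^ (m + 2) := le_self_pow₀ (by linarith) (by omega)
      have h2 : 0 ≤ (y ^ 2) ^ m := by positivity
      have h3 : 0 ≤ k * (4 * k) ^ m := by positivity
      nlinarith [mul_le_mul_of_nonneg_left (hy.le.trans h1) h2]
  -- the four inequalities
  have i1 : a ≤ 2 * (a + 2 * (ρ * y) * f * f1) + A * (b + f1 ^ 2) := by
    have t1 : 0 ≤ (y * f + ρ * f1) ^ 2 := sq_nonneg _
    have t2 := mul_le_mul_of_nonneg_right y1 ha0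
    have t3 : A * b = 2 * 2 ^ m * (y ^ (2 * m + 2) * a) := by rw [← eb, hA]; ring
    have t4 : 2 * ρ ^ 2 * f1 ^ 2 ≤ A * f1 ^ 2 := by
      have : (1 : ℝ) ≤ 2 ^ m := one_le_pow₀ (by norm_num)
      have h0 : 0 ≤ ρ ^ 2 * f1 ^ 2 := by positivity
      have e : A * f1 ^ 2 = 2 * 2 ^ m * (ρ ^ 2 * f1 ^ 2) := by rw [hA]; ring
      rw [e]; nlinarith
    have t5 : (y * f + ρ * f1) ^ 2 = y ^ 2 * a + 2 * ρ * y * f * f1 + ρ ^ 2 * f1 ^ 2 := by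
      rw [ha]; ring
    rw [mul_add A, t3]; nlinarith
  have i2 : b + f1 ^ 2 ≤ (f1 ^ 2 + f * F + b) + A / 2 * F ^ 2 + a / (2 * A) := by
    have : 0 ≤ (A * F + f) ^ 2 / (2 * A) := by positivity
    have e : (A * F + f) ^ 2 / (2 * A) = A / 2 * F ^ 2 + f * F + a / (2 * A) := by
      rw [ha]; field_simp; ring
    linarith
  have i12 : a ≤ 4 * (a + 2 * (ρ * y) * f * f1) + 2 * A * (f1 ^ 2 + f * F + b) + A ^ 2 * F ^ 2 := by
    have h1 := mul_le_mul_of_nonneg_left i2 hApos.le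
    have e : A * (a / (2 * A)) = a / 2 := by field_simp
    rw [mul_add A _ (a / (2 * A)), e] at h1
    nlinarith
  set D3 := σ ^ 2 * ((ρ * y) ^ (2 * m + 2) * f1 ^ 2 + (ρ * y) ^ (2 * m + 2) * (f * F)
          + σ ^ 2 * (ρ * y) ^ (4 * m + 4) * f ^ 2 - k * ((ρ * y) ^ (2 * m) * f ^ 2)) with hD3
  have i3 : 1 / 2 * hh ≤ D3 + 1 / 2 * F ^ 2 + k * g := by
    have h1 : 0 ≤ (σ ^ 2 * (ρ * y) ^ (2 * m + 2) * f + F) ^ 2 := sq_nonneg _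
    have e : (σ ^ 2 * (ρ * y) ^ (2 * m + 2) * f + F) ^ 2
        = hh + 2 * (σ ^ 2 * ((ρ * y) ^ (2 * m + 2) * (f * F))) + F ^ 2 := by rw [hhh]; ring
    have h2 : 0 ≤ σ ^ 2 * ((ρ * y) ^ (2 * m + 2) * f1 ^ 2) := by
      have : (ρ * y) ^ (2 * m + 2) = ((ρ * y) ^ (m + 1)) ^ 2 := by ring
      rw [this]; positivity
    have e3 : D3 = σ ^ 2 * ((ρ * y) ^ (2 * m + 2) * f1 ^ 2)
        + σ ^ 2 * ((ρ * y) ^ (2 * m + 2) * (f * F)) + hh - k * g := by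
      rw [hD3, hhh, hg]; ring
    rw [e3]; linarith
  have i4 : k * g ≤ 1 / 4 * hh + k * (4 * k) ^ m * ρ⁻¹ ^ 4 * a := by
    have h1 : 0 ≤ ρ⁻¹ ^ 4 * a := by positivity
    have := mul_le_mul_of_nonneg_right y2 h1
    rw [eg, eh]
    exact le_trans (le_of_eq (by ring)) (this.trans (le_of_eq (by ring)))
  have hc : 0 ≤ 2 * k * (4 * k) ^ m * ρ⁻¹ ^ 4 := by positivity
  have i5 := mul_le_mul_of_nonneg_left i12 hc
  have e6 : 2 * k * (4 * k) ^ m * ρ⁻¹ ^ 4 * (A ^ 2 * F ^ 2)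
      = 2 * k * (4 * k) ^ m * 4 ^ (m + 1) * F ^ 2 := by
    have h4 : (4 : ℝ) ^ (m + 1) = (2 ^ (m + 1)) ^ 2 := by rw [← pow_mul, mul_comm, pow_mul]; norm_num
    rw [hA, h4]; field_simp
  rw [mul_add, e6] at i5
  linarith

theorem int_deriv_zero {f f' : ℝ → ℝ} (hd : ∀ x, HasDerivAt f (f' x) x) (hc : Continuous f')
    (hs : HasCompactSupport f) : Integrable f' ∧ ∫ x, f' x = 0 := by
  have e : f' = deriv f := by funext x; exact (hd x).deriv.symm
  have hs' : HasCompactSupport f' := by rw [e]; exact hs.deriv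
  have hcf : Continuous f := continuous_iff_continuousAt.2 fun x => (hd x).continuousAt
  have hi : Integrable f' := hc.integrable_of_hasCompactSupport hs'
  exact ⟨hi, integral_eq_zero_of_hasDerivAt_of_integrable hd hi
    (hcf.integrable_of_hasCompactSupport hs)⟩

noncomputable def C1d (m : ℕ) : ℝ :=
  1 / 2 + 2 * (((m : ℝ) + 1) * (2 * m + 1)) * (4 * (((m : ℝ) + 1) * (2 * m + 1))) ^ m * 4 ^ (m + 1)

theorem C1d_pos (m : ℕ) : 0 < C1d m := by unfold C1d; positivity

theorem onedim (m : ℕ) (σ : ℝ) {f f1 f2 : ℝ → ℝ} (h1 : ∀ x, HasDerivAt f (f1 x) x)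
    (h2 : ∀ x, HasDerivAt f1 (f2 x) x) (hc : Continuous f2) (hs : HasCompactSupport f) :
    ∫ x, (σ * x ^ m * f x) ^ 2 ≤ C1d m * ∫ x, (f2 x - σ ^ 2 * x ^ (2 * m + 2) * f x) ^ 2 := by
  by_cases hσ0 : σ = 0
  · subst hσ0
    simp only [zero_mul, ne_eq, OfNat.ofNat_ne_zero, not_false_eq_true, zero_pow,
      integral_zero]
    exact mul_nonneg (C1d_pos m).le (integral_nonneg fun _ => sq_nonneg _)
  obtain ⟨ρ, hρ, hσ⟩ : ∃ ρ : ℝ, 0 < ρ ∧ σ ^ 2 * ρ ^ (2 * m + 4) = 1 := by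
    have hp : 0 < σ ^ 2 := by positivity
    refine ⟨((σ ^ 2)⁻¹) ^ ((1 : ℝ) / ((2 * m + 4 : ℕ) : ℝ)), by positivity, ?_⟩
    rw [one_div, Real.rpow_inv_natCast_pow (by positivity) (by omega)]
    field_simp
  set k : ℝ := ((m : ℝ) + 1) * (2 * m + 1) with hk
  have hm0 : (0 : ℝ) ≤ m := Nat.cast_nonneg m
  have hk1 : 1 ≤ k := by rw [hk]; nlinarith
  have c1 : Continuous f1 := continuous_iff_continuousAt.2 fun x => (h2 x).continuousAt
  have c0 : Continuous f := continuous_iff_continuousAt.2 fun x => (h1 x).continuousAt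
  have e1 : f1 = deriv f := by funext x; exact (h1 x).deriv.symm
  have e2 : f2 = deriv f1 := by funext x; exact (h2 x).deriv.symm
  have s1 : HasCompactSupport f1 := by rw [e1]; exact hs.deriv
  have s2 : HasCompactSupport f2 := by rw [e2]; exact s1.deriv
  set F : ℝ → ℝ := fun x => f2 x - σ ^ 2 * x ^ (2 * m + 2) * f x with hF
  have cF : Continuous F := by fun_prop
  have sF : HasCompactSupport F :=
    HasCompactSupport.sub s2 (hs.mul_left (f := fun x => σ ^ 2 * x ^ (2 * m + 2)))
  set c : ℝ := 2 * k * (4 * k) ^ m * ρ⁻¹ ^ 4 with hcdef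
  set A : ℝ := 2 * (2 ^ (m + 1) * ρ ^ 2) with hA
  set H : ℝ → ℝ := fun x => (σ ^ 2 * (x ^ (2 * m + 2) * f1 x - (m + 1) * x ^ (2 * m + 1) * f x)
    + c * (4 * x * f x + A * f1 x)) * f x with hH
  set H' : ℝ → ℝ := fun x => (σ ^ 2 * (x ^ (2 * m + 2) * f1 x ^ 2 + x ^ (2 * m + 2) * (f x * F x)
          + σ ^ 2 * x ^ (4 * m + 4) * f x ^ 2 - k * (x ^ (2 * m) * f x ^ 2))
        + c * (4 * (f x ^ 2 + 2 * x * f x * f1 x)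
          + A * (f1 x ^ 2 + f x * F x + σ ^ 2 * x ^ (2 * m + 2) * f x ^ 2))) with hH'
  have hd : ∀ x, HasDerivAt H (H' x) x := by
    intro x
    have p1 : HasDerivAt (fun x : ℝ => x ^ (2 * m + 2)) ((2 * m + 2) * x ^ (2 * m + 1)) x := by
      simpa using hasDerivAt_pow (2 * m + 2) x
    have p2 : HasDerivAt (fun x : ℝ => x ^ (2 * m + 1)) ((2 * m + 1) * x ^ (2 * m)) x := by
      simpa using hasDerivAt_pow (2 * m + 1) x
    have := ((((p1.mul (h2 x)).sub ((p2.const_mul ((m : ℝ) + 1)).mul (h1 x))).const_mul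
      (σ ^ 2)).add (((((hasDerivAt_id x).const_mul 4).mul (h1 x)).add
        ((h2 x).const_mul A)).const_mul c)).mul (h1 x)
    refine this.congr_deriv ?_
    simp only [hH', hF, hk, Pi.add_apply, Pi.mul_apply, Pi.sub_apply, id]
    ring
  have hcH : Continuous H' := by fun_prop
  obtain ⟨iH, zH⟩ := int_deriv_zero hd hcH hs.mul_left
  have iF : Integrable (fun x => F x ^ 2) :=
    (cF.pow 2).integrable_of_hasCompactSupport (by simpa [sq] using sF.mul_left (f := F))
  have iG : Integrable (fun x => (σ * x ^ m * f x) ^ 2) := by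
    apply Continuous.integrable_of_hasCompactSupport (by fun_prop)
    have := hs.mul_left (f := fun x => σ * x ^ m * f x * (σ * x ^ m))
    have e : (fun x => (σ * x ^ m * f x) ^ 2) = (fun x => σ * x ^ m * f x * (σ * x ^ m)) * f := by
      funext x; simp only [Pi.mul_apply]; ring
    rw [e]; exact this
  have hle : ∫ x, k * (σ * x ^ m * f x) ^ 2 ≤ ∫ x, (C1d m * F x ^ 2 + H' x) := by
    apply integral_mono (iG.const_mul _) ((iF.const_mul _).add iH)
    intro x
    have := onedim_pointwise m σ ρ k x (f x) (f1 x) (F x) hρ hk1 hσ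
    refine le_trans (le_of_eq ?_) this
    show k * (σ * x ^ m * f x) ^ 2 = _
    ring
  rw [integral_add (iF.const_mul _) iH, zH, add_zero, integral_const_mul, integral_const_mul] at hle
  have h0 : 0 ≤ ∫ x, (σ * x ^ m * f x) ^ 2 := integral_nonneg fun _ => sq_nonneg _
  nlinarith

/-! ### Partial Fourier transform -/

noncomputable def pin (φ : ℝ × ℝ → ℝ) (k : ℝ → ℝ) (x : ℝ) : ℝ := ∫ t, φ (x, t) * k t

theorem CS.slice {φ : ℝ × ℝ → ℝ} (h : CS φ) (x : ℝ) : HasCompactSupport (fun t => φ (x, t)) := by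
  have hK : IsCompact (Prod.snd '' tsupport φ) := h.cs.isCompact.image continuous_snd
  apply HasCompactSupport.intro hK
  intro t ht
  apply image_eq_zero_of_notMem_tsupport
  intro hm
  exact ht ⟨(x, t), hm, rfl⟩

theorem CS.slice_int {φ : ℝ × ℝ → ℝ} (h : CS φ) {k : ℝ → ℝ} (hk : Continuous k) (x : ℝ) :
    Integrable (fun t => φ (x, t) * k t) := by
  have hc := h.sm.continuous
  exact Continuous.integrable_of_hasCompactSupport (by fun_prop) (h.slice x).mul_right

theorem pin_hasDerivAt {φ : ℝ × ℝ → ℝ} (h : CS φ) {k : ℝ → ℝ} (hk : Continuous k) (x : ℝ) :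
    HasDerivAt (pin φ k) (pin (pdx φ) k x) x := by
  have hK : IsCompact (Prod.snd '' tsupport φ) := h.cs.isCompact.image continuous_snd
  have hc := h.sm.continuous
  have hc' := h.dx.sm.continuous
  obtain ⟨M, hM⟩ := h.dx.cs.exists_bound_of_continuous hc'
  have hi : IntegrableOn (fun t => M * |k t|) (Prod.snd '' tsupport φ) :=
    (Continuous.continuousOn (by fun_prop)).integrableOn_compact hK
  have := hasDerivAt_integral_of_dominated_loc_of_deriv_le (μ := (volume : Measure ℝ))
    (F := fun x t => φ (x, t) * k t) (F' := fun x t => pdx φ (x, t) * k t) (x₀ := x)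
    (bound := (Prod.snd '' tsupport φ).indicator (fun t => M * |k t|)) (s := Set.univ)
    Filter.univ_mem
    (Filter.Eventually.of_forall fun y => Continuous.aestronglyMeasurable (by fun_prop))
    (h.slice_int hk x) (Continuous.aestronglyMeasurable (by fun_prop))
    (Filter.Eventually.of_forall fun t y _ => ?_)
    ((integrable_indicator_iff hK.measurableSet).2 hi)
    (Filter.Eventually.of_forall fun t y _ => ?_)
  · exact this.2
  · by_cases ht : t ∈ Prod.snd '' tsupport φ
    · rw [Set.indicator_of_mem ht, norm_mul, Real.norm_eq_abs (k t)]
      exact mul_le_mul_of_nonneg_right (hM _) (abs_nonneg _)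
    · rw [Set.indicator_of_notMem ht]
      have : pdx φ (y, t) = 0 := by
        apply image_eq_zero_of_notMem_tsupport
        intro hm
        exact ht ⟨(y, t), tsupport_pdx h.sm hm, rfl⟩
      simp [this]
  · exact (h.sm.hasx (y, t)).mul_const (k t)

theorem pin_cs {φ : ℝ × ℝ → ℝ} (h : CS φ) (k : ℝ → ℝ) : HasCompactSupport (pin φ k) := by
  have hK : IsCompact (Prod.fst '' tsupport φ) := h.cs.isCompact.image continuous_fst
  apply HasCompactSupport.intro hK
  intro x hx
  have : ∀ t, φ (x, t) = 0 := fun t => by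
    apply image_eq_zero_of_notMem_tsupport
    intro hm
    exact hx ⟨(x, t), hm, rfl⟩
  simp [pin, this]

theorem pin_cont {φ : ℝ × ℝ → ℝ} (h : CS φ) {k : ℝ → ℝ} (hk : Continuous k) :
    Continuous (pin φ k) :=
  continuous_iff_continuousAt.2 fun x => (pin_hasDerivAt h hk x).continuousAt

theorem pin_pdt {φ : ℝ × ℝ → ℝ} (h : CS φ) {k k' : ℝ → ℝ} (hk : ∀ t, HasDerivAt k (k' t) t)
    (hk' : Continuous k') (x : ℝ) : pin (pdt φ) k x = - pin φ k' x := by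
  have hkc : Continuous k := continuous_iff_continuousAt.2 fun x => (hk x).continuousAt
  have hc := h.sm.continuous
  have hc' := h.dt.sm.continuous
  have hd : ∀ t, HasDerivAt (fun t => φ (x, t) * k t)
      (pdt φ (x, t) * k t + φ (x, t) * k' t) t := fun t => (h.sm.hast (x, t)).mul (hk t)
  have := (int_deriv_zero hd (by fun_prop) (h.slice x).mul_right).2
  rw [integral_add (h.dt.slice_int hkc x) (h.slice_int hk' x)] at this
  unfold pin
  linarith

theorem pin_sm {φ : ℝ × ℝ → ℝ} {q : ℝ → ℝ} {k : ℝ → ℝ} (x : ℝ) :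
    pin (fun p => q p.1 * φ p) k x = q x * pin φ k x := by
  unfold pin
  rw [← integral_const_mul]
  simp only [mul_assoc]

noncomputable def kc (τ t : ℝ) : ℝ := Real.cos (2 * Real.pi * τ * t)
noncomputable def ks (τ t : ℝ) : ℝ := Real.sin (2 * Real.pi * τ * t)

theorem kc_cont (τ : ℝ) : Continuous (kc τ) := by unfold kc; fun_prop
theorem ks_cont (τ : ℝ) : Continuous (ks τ) := by unfold ks; fun_prop

theorem kc_deriv (τ t : ℝ) : HasDerivAt (kc τ) (-(2 * Real.pi * τ) * ks τ t) t := by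
  unfold kc ks
  have := ((hasDerivAt_id t).const_mul (2 * Real.pi * τ)).cos
  refine this.congr_deriv ?_
  simp; ring

theorem ks_deriv (τ t : ℝ) : HasDerivAt (ks τ) ((2 * Real.pi * τ) * kc τ t) t := by
  unfold kc ks
  have := ((hasDerivAt_id t).const_mul (2 * Real.pi * τ)).sin
  refine this.congr_deriv ?_
  simp; ring

theorem pin_kconst (φ : ℝ × ℝ → ℝ) (k : ℝ → ℝ) (c x : ℝ) :
    pin φ (fun t => c * k t) x = c * pin φ k x := by
  unfold pin
  rw [← integral_const_mul]
  congr 1; funext t; ring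

theorem pin_t_c {φ : ℝ × ℝ → ℝ} (h : CS φ) (τ x : ℝ) :
    pin (pdt φ) (kc τ) x = (2 * Real.pi * τ) * pin φ (ks τ) x := by
  rw [pin_pdt h (kc_deriv τ) (by have := ks_cont τ; fun_prop), pin_kconst]; ring

theorem pin_t_s {φ : ℝ × ℝ → ℝ} (h : CS φ) (τ x : ℝ) :
    pin (pdt φ) (ks τ) x = -((2 * Real.pi * τ) * pin φ (kc τ) x) := by
  rw [pin_pdt h (ks_deriv τ) (by have := kc_cont τ; fun_prop), pin_kconst]

open FourierTransform in
theorem planch1 {ψ : ℝ → ℝ} (hs : ContDiff ℝ (⊤ : ℕ∞) ψ) (hc : HasCompactSupport ψ) :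
    ∫⁻ τ, ENNReal.ofReal ((∫ t, ψ t * kc τ t) ^ 2 + (∫ t, ψ t * ks τ t) ^ 2)
      = ENNReal.ofReal (∫ t, ψ t ^ 2) := by
  have hcc : HasCompactSupport (fun t => (ψ t : ℂ)) := hc.comp_left (g := fun x : ℝ => (x : ℂ)) (by simp)
  have hss : ContDiff ℝ (⊤ : ℕ∞) (fun t => (ψ t : ℂ)) := Complex.ofRealCLM.contDiff.comp hs
  set f := hcc.toSchwartzMap hss with hf
  have hP := SchwartzMap.integral_norm_sq_fourier f
  have e1 : ∀ τ, ‖𝓕 f τ‖ ^ 2 = (∫ t, ψ t * kc τ t) ^ 2 + (∫ t, ψ t * ks τ t) ^ 2 := by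
    intro τ
    have hi : Integrable (fun t : ℝ => Complex.exp (↑(-2 * Real.pi * t * τ) * Complex.I) * (ψ t : ℂ)) := by
      have hcont := hs.continuous
      have h1 : HasCompactSupport (fun t : ℝ => Complex.exp (↑(-2 * Real.pi * t * τ) * Complex.I)
          * (ψ t : ℂ)) := hcc.mul_left
      exact Continuous.integrable_of_hasCompactSupport (by fun_prop) h1
    have e0 : 𝓕 f τ = ∫ t : ℝ, Complex.exp (↑(-2 * Real.pi * t * τ) * Complex.I) * (ψ t : ℂ) := by
      rw [SchwartzMap.fourier_coe, Real.fourier_real_eq_integral_exp_smul]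
      rfl
    have hre : (𝓕 f τ).re = ∫ t, ψ t * kc τ t := by
      rw [e0, ← RCLike.re_eq_complex_re, ← integral_re hi]
      congr 1; funext t
      simp only [RCLike.re_eq_complex_re, Complex.re_mul_ofReal,
        Complex.exp_ofReal_mul_I_re, kc]
      rw [mul_comm]; congr 1
      rw [← Real.cos_neg]; congr 1; ring
    have him : (𝓕 f τ).im = -∫ t, ψ t * ks τ t := by
      rw [e0, ← RCLike.im_eq_complex_im, ← integral_im hi, ← integral_neg]
      congr 1; funext t
      simp only [RCLike.im_eq_complex_im, Complex.im_mul_ofReal,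
        Complex.exp_ofReal_mul_I_im, ks]
      rw [mul_comm, ← mul_neg]; congr 1
      rw [← Real.sin_neg]; congr 1; ring
    rw [← Complex.normSq_eq_norm_sq, Complex.normSq_apply, hre, him]; ring
  have e2 : ∀ t, ‖f t‖ ^ 2 = ψ t ^ 2 := by
    intro t
    show ‖(ψ t : ℂ)‖ ^ 2 = _
    rw [Complex.norm_real, Real.norm_eq_abs, sq_abs]
  have hfint : Integrable (fun τ => ‖𝓕 f τ‖ ^ 2) := by
    have := (𝓕 f).memLp 2 (volume : Measure ℝ)
    exact (memLp_two_iff_integrable_sq_norm this.1).1 this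
  simp only [← e1, ← e2]
  rw [← hP, ofReal_integral_eq_lintegral_ofReal hfint (Filter.Eventually.of_forall fun _ => by positivity)]

theorem pin_meas {φ : ℝ × ℝ → ℝ} (h : CS φ) {k : ℝ → ℝ → ℝ}
    (hk : Continuous (fun q : ℝ × ℝ => k q.1 q.2)) :
    Measurable (fun q : ℝ × ℝ => pin φ (k q.2) q.1) := by
  have hc := h.sm.continuous
  have : StronglyMeasurable (fun q : (ℝ × ℝ) × ℝ => φ (q.1.1, q.2) * k q.1.2 q.2) := by
    apply Continuous.stronglyMeasurable
    have h2 : Continuous (fun q : (ℝ × ℝ) × ℝ => k q.1.2 q.2) :=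
      hk.comp (by fun_prop : Continuous (fun q : (ℝ × ℝ) × ℝ => (q.1.2, q.2)))
    fun_prop
  exact (this.integral_prod_right' (ν := volume)).measurable

theorem planch2 {φ : ℝ × ℝ → ℝ} (h : CS φ) :
    ∫⁻ τ, ∫⁻ x, ENNReal.ofReal (pin φ (kc τ) x ^ 2 + pin φ (ks τ) x ^ 2)
      = ENNReal.ofReal (∫ p, φ p ^ 2) := by
  have m1 := pin_meas h (k := kc) (by unfold kc; fun_prop)
  have m2 := pin_meas h (k := ks) (by unfold ks; fun_prop)
  have m3 : Measurable (fun q : ℝ × ℝ =>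
      ENNReal.ofReal (pin φ (kc q.2) q.1 ^ 2 + pin φ (ks q.2) q.1 ^ 2)) :=
    ((m1.pow_const 2).add (m2.pow_const 2)).ennreal_ofReal
  rw [← lintegral_lintegral_swap (f := fun x τ =>
    ENNReal.ofReal (pin φ (kc τ) x ^ 2 + pin φ (ks τ) x ^ 2)) m3.aemeasurable]
  have : ∀ x, ∫⁻ τ, ENNReal.ofReal (pin φ (kc τ) x ^ 2 + pin φ (ks τ) x ^ 2)
      = ENNReal.ofReal (∫ t, φ (x, t) ^ 2) := fun x =>
    planch1 (ψ := fun t => φ (x, t)) (h.sm.comp (by fun_prop)) (h.slice x)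
  simp only [this]
  have hi := h.sqint
  rw [Measure.volume_eq_prod] at hi ⊢
  rw [integral_prod _ hi, ofReal_integral_eq_lintegral_ofReal hi.integral_prod_left
    (Filter.Eventually.of_forall fun _ => integral_nonneg fun _ => sq_nonneg _)]

/-! ### The constant coefficient estimate -/

theorem Sm_pow (n : ℕ) : Sm (fun p : ℝ × ℝ => p.1 ^ n) := contDiff_fst.pow n

theorem CS.cmul {f : ℝ × ℝ → ℝ} (c : ℝ) (n : ℕ) (hf : CS f) :
    CS (fun p : ℝ × ℝ => (c * p.1 ^ n) * f p) :=
  CS.mul_left ((Sm.cst c).mul (Sm_pow n)) hf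

theorem sq_integrable_1d {f : ℝ → ℝ} (hc : Continuous f) (hs : HasCompactSupport f) :
    Integrable (fun x => f x ^ 2) :=
  (hc.pow 2).integrable_of_hasCompactSupport (by simpa [sq] using hs.mul_left (f := f))

theorem bad_est (m : ℕ) (s : ℝ) {z : ℝ × ℝ → ℝ} (h : CS z) :
    ∫ p : ℝ × ℝ, ((s * p.1 ^ m) * pdt z p) ^ 2 ≤
      C1d m * ∫ p : ℝ × ℝ, (pdx (pdx z) p + (s ^ 2 * p.1 ^ (2 * m + 2)) * pdt (pdt z) p) ^ 2 := by
  set φ1 : ℝ × ℝ → ℝ := fun p => (s * p.1 ^ m) * pdt z p with hφ1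
  set φ2 : ℝ × ℝ → ℝ := fun p => pdx (pdx z) p + (s ^ 2 * p.1 ^ (2 * m + 2)) * pdt (pdt z) p
    with hφ2
  have c1 : CS φ1 := CS.cmul s m h.dt
  have c2' := CS.cmul (s ^ 2) (2 * m + 2) h.dt.dt
  have c2 : CS φ2 := h.dx.dx.add c2'
  have C0 := (C1d_pos m).le
  have key : ∀ τ : ℝ, (∫ x, (pin φ1 (kc τ) x) ^ 2) ≤ C1d m * ∫ x, (pin φ2 (ks τ) x) ^ 2 := by
    intro τ
    have o := onedim m (s * (2 * Real.pi * τ)) (fun x => pin_hasDerivAt h (ks_cont τ) x)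
      (fun x => pin_hasDerivAt h.dx (ks_cont τ) x) (pin_cont h.dx.dx (ks_cont τ)) (pin_cs h _)
    have e1 : ∀ x, pin φ1 (kc τ) x = s * (2 * Real.pi * τ) * x ^ m * pin z (ks τ) x := by
      intro x
      rw [hφ1, pin_sm (q := fun x => s * x ^ m), pin_t_c h]; ring
    have e2 : ∀ x, pin φ2 (ks τ) x = pin (pdx (pdx z)) (ks τ) x
        - (s * (2 * Real.pi * τ)) ^ 2 * x ^ (2 * m + 2) * pin z (ks τ) x := by
      intro x
      have : pin φ2 (ks τ) x = pin (pdx (pdx z)) (ks τ) x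
          + pin (fun p : ℝ × ℝ => (s ^ 2 * p.1 ^ (2 * m + 2)) * pdt (pdt z) p) (ks τ) x := by
        unfold pin
        rw [← integral_add (h.dx.dx.slice_int (ks_cont τ) x) (c2'.slice_int (ks_cont τ) x)]
        congr 1; funext t; simp only [hφ2]; ring
      rw [this, pin_sm (q := fun x => s ^ 2 * x ^ (2 * m + 2)), pin_t_s h.dt, pin_t_c h]; ring
    simp only [e1, e2]
    exact o
  have key' : ∀ τ : ℝ, (∫ x, (pin φ1 (ks τ) x) ^ 2) ≤ C1d m * ∫ x, (pin φ2 (kc τ) x) ^ 2 := by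
    intro τ
    have o := onedim m (s * (2 * Real.pi * τ)) (fun x => pin_hasDerivAt h (kc_cont τ) x)
      (fun x => pin_hasDerivAt h.dx (kc_cont τ) x) (pin_cont h.dx.dx (kc_cont τ)) (pin_cs h _)
    have e1 : ∀ x, (pin φ1 (ks τ) x) ^ 2
        = (s * (2 * Real.pi * τ) * x ^ m * pin z (kc τ) x) ^ 2 := by
      intro x
      rw [hφ1, pin_sm (q := fun x => s * x ^ m), pin_t_s h]; ring
    have e2 : ∀ x, pin φ2 (kc τ) x = pin (pdx (pdx z)) (kc τ) x
        - (s * (2 * Real.pi * τ)) ^ 2 * x ^ (2 * m + 2) * pin z (kc τ) x := by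
      intro x
      have : pin φ2 (kc τ) x = pin (pdx (pdx z)) (kc τ) x
          + pin (fun p : ℝ × ℝ => (s ^ 2 * p.1 ^ (2 * m + 2)) * pdt (pdt z) p) (kc τ) x := by
        unfold pin
        rw [← integral_add (h.dx.dx.slice_int (kc_cont τ) x) (c2'.slice_int (kc_cont τ) x)]
        congr 1; funext t; simp only [hφ2]; ring
      rw [this, pin_sm (q := fun x => s ^ 2 * x ^ (2 * m + 2)), pin_t_c h.dt, pin_t_s h]; ring
    simp only [e1, e2]
    exact o
  have tr : ∀ φ : ℝ × ℝ → ℝ, CS φ → ∀ τ : ℝ,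
      ∫⁻ x, ENNReal.ofReal (pin φ (kc τ) x ^ 2 + pin φ (ks τ) x ^ 2)
        = ENNReal.ofReal ((∫ x, pin φ (kc τ) x ^ 2) + ∫ x, pin φ (ks τ) x ^ 2) := by
    intro φ hφ τ
    have i1 := sq_integrable_1d (pin_cont hφ (kc_cont τ)) (pin_cs hφ _)
    have i2 := sq_integrable_1d (pin_cont hφ (ks_cont τ)) (pin_cs hφ _)
    rw [← integral_add i1 i2]
    exact (ofReal_integral_eq_lintegral_ofReal (i1.add i2)
      (Filter.Eventually.of_forall fun _ => add_nonneg (sq_nonneg _) (sq_nonneg _))).symm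
  have fin : ENNReal.ofReal (∫ p, φ1 p ^ 2) ≤ ENNReal.ofReal (C1d m * ∫ p, φ2 p ^ 2) := by
    rw [ENNReal.ofReal_mul C0, ← planch2 c1, ← planch2 c2, ← lintegral_const_mul' _ _ ENNReal.ofReal_ne_top]
    apply lintegral_mono
    intro τ
    simp only [tr φ1 c1, tr φ2 c2]
    rw [← ENNReal.ofReal_mul C0]
    apply ENNReal.ofReal_le_ofReal
    have := key τ
    have := key' τ
    linarith
  exact (ENNReal.ofReal_le_ofReal_iff
    (mul_nonneg C0 (integral_nonneg fun _ => sq_nonneg _))).1 fin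

theorem const_est (m : ℕ) : ∃ C : ℝ, 0 < C ∧ ∀ s : ℝ, 1 ≤ s → ∀ z : ℝ × ℝ → ℝ, CS z →
    Nm (pdx (pdx z)) + Nm (fun p => p.1 ^ (m + 1) * pdx (pdt z) p)
      + Nm (fun p => p.1 ^ m * pdt z p) + Nm (fun p => p.1 ^ (2 * m + 2) * pdt (pdt z) p) ≤
      C * Nm (fun p => pdx (pdx z) p + (s ^ 2 * p.1 ^ (2 * m + 2)) * pdt (pdt z) p) := by
  set k : ℝ := ((m : ℝ) + 1) * (2 * m + 1) with hk
  have hm0 : (0 : ℝ) ≤ m := Nat.cast_nonneg m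
  have hk1 : 1 ≤ k := by rw [hk]; nlinarith
  have C0 := C1d_pos m
  set D : ℝ := 1 + 2 * k * C1d m with hD
  have hDpos : 0 < D := by positivity
  refine ⟨4 * Real.sqrt D, by positivity, fun s hs z h => ?_⟩
  set φ : ℝ × ℝ → ℝ := fun p => pdx (pdx z) p + (s ^ 2 * p.1 ^ (2 * m + 2)) * pdt (pdt z) p with hφ
  have cφ : CS φ := h.dx.dx.add (CS.cmul (s ^ 2) (2 * m + 2) h.dt.dt)
  have b0 := bad_est m s h
  have cb : CS (fun p : ℝ × ℝ => (s * p.1 ^ m) * pdt z p) := CS.cmul s m h.dt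
  have c1 := h.dx.dx
  have c2 : CS (fun p => p.1 ^ (m + 1) * pdx (pdt z) p) := CS.mul_left (Sm_pow _) h.dt.dx
  have c3 : CS (fun p => p.1 ^ m * pdt z p) := CS.mul_left (Sm_pow _) h.dt
  have c4 : CS (fun p => p.1 ^ (2 * m + 2) * pdt (pdt z) p) := CS.mul_left (Sm_pow _) h.dt.dt
  set Φ : ℝ × ℝ → ℝ := fun p => p.1 ^ (2 * m + 2) * (pdx z p * pdt (pdt z) p)
    + (((m : ℝ) + 1) * p.1 ^ (2 * m + 1)) * (pdt z p * pdt z p) with hΦ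
  set Ψ : ℝ × ℝ → ℝ := fun p => p.1 ^ (2 * m + 2) * (pdx z p * pdx (pdt z) p)
    + ((2 * (m : ℝ) + 2) * p.1 ^ (2 * m + 1)) * (pdx z p * pdt z p) with hΨ
  have cΦ : CS Φ := (CS.mul_left (Sm_pow _) (h.dx.mul h.dt.dt)).add (CS.cmul _ _ (h.dt.mul h.dt))
  have cΨ : CS Ψ := (CS.mul_left (Sm_pow _) (h.dx.mul h.dt.dx)).add (CS.cmul _ _ (h.dx.mul h.dt))
  have eΦ : ∀ p, pdx Φ p = (2 * m + 2) * p.1 ^ (2 * m + 1) * (pdx z p * pdt (pdt z) p)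
      + p.1 ^ (2 * m + 2) * (pdx (pdx z) p * pdt (pdt z) p + pdx z p * pdx (pdt (pdt z)) p)
      + ((m : ℝ) + 1) * ((2 * m + 1) * p.1 ^ (2 * m)) * (pdt z p * pdt z p)
      + (((m : ℝ) + 1) * p.1 ^ (2 * m + 1)) * (2 * pdt z p * pdx (pdt z) p) := by
    intro p
    have p1 : HasDerivAt (fun x : ℝ => x ^ (2 * m + 2)) ((2 * m + 2) * p.1 ^ (2 * m + 1)) p.1 := by
      simpa using hasDerivAt_pow (2 * m + 2) p.1
    have p2 : HasDerivAt (fun x : ℝ => x ^ (2 * m + 1)) ((2 * m + 1) * p.1 ^ (2 * m)) p.1 := by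
      simpa using hasDerivAt_pow (2 * m + 1) p.1
    have := ((p1.mul ((h.dx.sm.hasx p).mul (h.dt.dt.sm.hasx p))).add
      ((p2.const_mul ((m : ℝ) + 1)).mul ((h.dt.sm.hasx p).mul (h.dt.sm.hasx p)))).deriv
    refine Eq.trans this ?_
    simp only [Pi.mul_apply]
    ring
  have eΨ : ∀ p, pdt Ψ p = p.1 ^ (2 * m + 2) * (pdx (pdt z) p * pdx (pdt z) p
        + pdx z p * pdx (pdt (pdt z)) p)
      + ((2 * (m : ℝ) + 2) * p.1 ^ (2 * m + 1)) * (pdx (pdt z) p * pdt z p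
        + pdx z p * pdt (pdt z) p) := by
    intro p
    have := ((((h.dx.sm.hast p).mul (h.dt.dx.sm.hast p)).const_mul (p.1 ^ (2 * m + 2))).add
      (((h.dx.sm.hast p).mul (h.dt.sm.hast p)).const_mul
        ((2 * (m : ℝ) + 2) * p.1 ^ (2 * m + 1)))).deriv
    refine Eq.trans this ?_
    rw [pdt_pdx h.sm, pdt_pdx h.dt.sm]
  have main : ∫ p, (pdx (pdx z) p ^ 2 + ((p.1 ^ (m + 1) * pdx (pdt z) p) ^ 2
      + (p.1 ^ (2 * m + 2) * pdt (pdt z) p) ^ 2)) ≤ ∫ p, ((φ p ^ 2 + (2 * k) *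
        ((s * p.1 ^ m) * pdt z p) ^ 2) + ((-(2 * s ^ 2)) * pdx Φ p + (2 * s ^ 2) * pdt Ψ p)) := by
    apply integral_mono (c1.sqint.add (c2.sqint.add c4.sqint))
      ((cφ.sqint.add (cb.sqint.const_mul _)).add ((cΦ.dx.int.const_mul _).add (cΨ.dt.int.const_mul _)))
    intro p
    show pdx (pdx z) p ^ 2 + ((p.1 ^ (m + 1) * pdx (pdt z) p) ^ 2
      + (p.1 ^ (2 * m + 2) * pdt (pdt z) p) ^ 2) ≤ (φ p ^ 2 + (2 * k) *
        ((s * p.1 ^ m) * pdt z p) ^ 2) + ((-(2 * s ^ 2)) * pdx Φ p + (2 * s ^ 2) * pdt Ψ p)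
    rw [eΦ, eΨ]
    have hs2 : 1 ≤ s ^ 2 := one_le_pow₀ hs
    have q1 : 0 ≤ (2 * s ^ 2 - 1) * (p.1 ^ (m + 1) * pdx (pdt z) p) ^ 2 :=
      mul_nonneg (by linarith) (sq_nonneg _)
    have q2 : 0 ≤ ((s ^ 2) ^ 2 - 1) * (p.1 ^ (2 * m + 2) * pdt (pdt z) p) ^ 2 :=
      mul_nonneg (by nlinarith) (sq_nonneg _)
    rw [← sub_nonneg]
    refine le_trans (add_nonneg q1 q2) (le_of_eq ?_)
    simp only [hφ, hk]
    ring
  rw [integral_add3 c1.sqint c2.sqint c4.sqint] at main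
  have hR : ∫ p, ((φ p ^ 2 + (2 * k) *
        ((s * p.1 ^ m) * pdt z p) ^ 2) + ((-(2 * s ^ 2)) * pdx Φ p + (2 * s ^ 2) * pdt Ψ p))
      = (∫ p, φ p ^ 2) + (2 * k) * ∫ p : ℝ × ℝ, ((s * p.1 ^ m) * pdt z p) ^ 2 := by
    have j1 := cφ.sqint.add (cb.sqint.const_mul (2 * k))
    have := integral_add3 j1 (cΦ.dx.int.const_mul (-(2 * s ^ 2))) (cΨ.dt.int.const_mul (2 * s ^ 2))
    refine Eq.trans this ?_
    rw [integral_const_mul, integral_const_mul, cΦ.idx, cΨ.idt, mul_zero, mul_zero, add_zero,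
      add_zero, ← integral_const_mul]
    exact integral_add cφ.sqint (cb.sqint.const_mul (2 * k))
  rw [hR] at main
  have hb : ∫ p : ℝ × ℝ, (p.1 ^ m * pdt z p) ^ 2 ≤ ∫ p : ℝ × ℝ, ((s * p.1 ^ m) * pdt z p) ^ 2 := by
    apply integral_mono c3.sqint cb.sqint
    intro p
    have hs2 : 1 ≤ s ^ 2 := one_le_pow₀ hs
    have : 0 ≤ (p.1 ^ m * pdt z p) ^ 2 := sq_nonneg _
    show (p.1 ^ m * pdt z p) ^ 2 ≤ ((s * p.1 ^ m) * pdt z p) ^ 2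
    have e : ((s * p.1 ^ m) * pdt z p) ^ 2 = s ^ 2 * (p.1 ^ m * pdt z p) ^ 2 := by ring
    rw [e]; nlinarith
  rw [← Nm_sq, ← Nm_sq, ← Nm_sq, ← Nm_sq φ] at main
  rw [← Nm_sq φ] at b0
  rw [← Nm_sq] at hb
  have n1 := sq_nonneg (Nm (pdx (pdx z)))
  have n2 := sq_nonneg (Nm (fun p => p.1 ^ (m + 1) * pdx (pdt z) p))
  have n4 := sq_nonneg (Nm (fun p => p.1 ^ (2 * m + 2) * pdt (pdt z) p))
  have nφ := sq_nonneg (Nm φ)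
  have tot : (Nm φ ^ 2) + (2 * k) * (∫ p : ℝ × ℝ, ((s * p.1 ^ m) * pdt z p) ^ 2)
      ≤ D * Nm φ ^ 2 := by
    have := mul_le_mul_of_nonneg_left b0 (by linarith : 0 ≤ 2 * k)
    rw [hD]; linarith
  have fin : ∀ y : ℝ, y ^ 2 ≤ D * Nm φ ^ 2 → y ≤ Real.sqrt D * Nm φ := by
    intro y hy
    apply le_of_sq_le_sq _ (mul_nonneg (Real.sqrt_nonneg _) (Nm_nonneg _))
    rw [mul_pow, Real.sq_sqrt hDpos.le]; exact hy
  have g1 := fin (Nm (pdx (pdx z))) (by linarith)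
  have g2 := fin (Nm (fun p => p.1 ^ (m + 1) * pdx (pdt z) p)) (by linarith)
  have g4 := fin (Nm (fun p => p.1 ^ (2 * m + 2) * pdt (pdt z) p)) (by linarith)
  have g3 := fin (Nm (fun p => p.1 ^ m * pdt z p)) (by
    refine hb.trans (b0.trans (mul_le_mul_of_nonneg_right ?_ nφ))
    rw [hD]; nlinarith)
  linarith

/-! ### Variable coefficients: localisation -/

/-- `F` is dominated by the functional `Q` on test functions. -/
def Dom (U : Set (ℝ × ℝ)) (F : (ℝ × ℝ → ℝ) → (ℝ × ℝ → ℝ)) (Q : (ℝ × ℝ → ℝ) → ℝ) : Prop :=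
  ∃ C : ℝ, 0 ≤ C ∧ ∀ v, TF U v → TF U (F v) ∧ Nm (F v) ≤ C * Q v

theorem Dom.add {U F G Q} (hF : Dom U F Q) (hG : Dom U G Q) :
    Dom U (fun v p => F v p + G v p) Q := by
  obtain ⟨C, hC, h⟩ := hF
  obtain ⟨D, hD, k⟩ := hG
  refine ⟨C + D, add_nonneg hC hD, fun v hv => ⟨(h v hv).1.add (k v hv).1, ?_⟩⟩
  have := CS.tri (h v hv).1.toCS (k v hv).1.toCS
  have := (h v hv).2
  have := (k v hv).2
  linarith

theorem Dom.mul {U F Q} (hU : Bornology.IsBounded U) {c : ℝ × ℝ → ℝ} (hc : Sm c) (hF : Dom U F Q) :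
    Dom U (fun v p => c p * F v p) Q := by
  obtain ⟨C, hC, h⟩ := hF
  obtain ⟨M, hM, k⟩ := coef_bound hU hc
  refine ⟨M * C, mul_nonneg hM hC, fun v hv => ⟨(h v hv).1.mul_left hc, ?_⟩⟩
  have h1 := k _ (h v hv).1
  have := mul_le_mul_of_nonneg_left (h v hv).2 hM
  linarith

theorem Dom.congr {U F G Q} (hF : Dom U F Q) (h : ∀ v, TF U v → ∀ p, G v p = F v p) :
    Dom U G Q := by
  obtain ⟨C, hC, k⟩ := hF
  refine ⟨C, hC, fun v hv => ?_⟩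
  have e : G v = F v := funext (h v hv)
  rw [e]; exact k v hv

theorem pdx_congr_open {S : Set (ℝ × ℝ)} (hS : IsOpen S) {f g : ℝ × ℝ → ℝ}
    (h : ∀ p ∈ S, f p = g p) : ∀ p ∈ S, pdx f p = pdx g p := by
  intro p hp
  apply Filter.EventuallyEq.deriv_eq
  have c : ContinuousAt (fun x : ℝ => (x, p.2)) p.1 := by fun_prop
  have : ∀ᶠ x in nhds p.1, (x, p.2) ∈ S := c.eventually (hS.mem_nhds hp)
  filter_upwards [this] with x hx using h _ hx

theorem pdt_congr_open {S : Set (ℝ × ℝ)} (hS : IsOpen S) {f g : ℝ × ℝ → ℝ}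
    (h : ∀ p ∈ S, f p = g p) : ∀ p ∈ S, pdt f p = pdt g p := by
  intro p hp
  apply Filter.EventuallyEq.deriv_eq
  have c : ContinuousAt (fun t : ℝ => (p.1, t)) p.2 := by fun_prop
  have : ∀ᶠ t in nhds p.2, (p.1, t) ∈ S := c.eventually (hS.mem_nhds hp)
  filter_upwards [this] with x hx using h _ hx

/-- density of the four controlled quantities -/
noncomputable def dens (m : ℕ) (w : ℝ × ℝ → ℝ) : ℝ × ℝ → ℝ := fun p =>
  pdx (pdx w) p ^ 2 + ((p.1 ^ (m + 1) * pdx (pdt w) p) ^ 2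
    + ((p.1 ^ m * pdt w p) ^ 2 + (p.1 ^ (2 * m + 2) * pdt (pdt w) p) ^ 2))

theorem dens_nonneg (m : ℕ) (w : ℝ × ℝ → ℝ) (p : ℝ × ℝ) : 0 ≤ dens m w p := by
  unfold dens; positivity

theorem dens_int (m : ℕ) {w : ℝ × ℝ → ℝ} (hw : CS w) : Integrable (dens m w) :=
  hw.dx.dx.sqint.add ((CS.mul_left (Sm_pow _) hw.dt.dx).sqint.add
    ((CS.mul_left (Sm_pow _) hw.dt).sqint.add (CS.mul_left (Sm_pow _) hw.dt.dt).sqint))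

theorem dens_integral (m : ℕ) {w : ℝ × ℝ → ℝ} (hw : CS w) : ∫ p, dens m w p =
    Nm (pdx (pdx w)) ^ 2 + (Nm (fun p => p.1 ^ (m + 1) * pdx (pdt w) p) ^ 2
    + (Nm (fun p => p.1 ^ m * pdt w p) ^ 2 + Nm (fun p => p.1 ^ (2 * m + 2) * pdt (pdt w) p) ^ 2)) := by
  have i1 := hw.dx.dx.sqint
  have i2 := (CS.mul_left (Sm_pow (m + 1)) hw.dt.dx).sqint
  have i3 := (CS.mul_left (Sm_pow m) hw.dt).sqint
  have i4 := (CS.mul_left (Sm_pow (2 * m + 2)) hw.dt.dt).sqint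
  simp only [Nm_sq]
  rw [← integral_add i3 i4]
  exact integral_add3 i1 i2 (i3.add i4)

/-- lower order operator norm -/
noncomputable def Plin (m : ℕ) (a b : ℝ × ℝ → ℝ) (w : ℝ × ℝ → ℝ) : ℝ × ℝ → ℝ := fun p =>
  pdx (pdx w) p + (p.1 ^ (2 * m + 2) * a p * pdt (pdt w) p + b p * (p.1 ^ (m + 1) * pdt w p))

theorem Plin_TF {m : ℕ} {U} {a b w : ℝ × ℝ → ℝ} (ha : Sm a) (hb : Sm b) (hw : TF U w) :
    TF U (Plin m a b w) :=
  hw.dx.dx.add ((TF.mul_left ((Sm_pow _).mul ha) hw.dt.dt).add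
    (TF.mul_left hb (TF.mul_left (Sm_pow _) hw.dt)))

noncomputable def Q0 (m : ℕ) (a b : ℝ × ℝ → ℝ) (w : ℝ × ℝ → ℝ) : ℝ :=
  Nm (Plin m a b w) + Nm w + Nm (pdx w) + Nm (fun p => p.1 ^ (m + 1) * pdt w p)

theorem Q0_nonneg (m a b w) : 0 ≤ Q0 m a b w := by
  unfold Q0
  have := Nm_nonneg (Plin m a b w)
  have := Nm_nonneg w
  have := Nm_nonneg (pdx w)
  have := Nm_nonneg (fun p => p.1 ^ (m + 1) * pdt w p)
  linarith

theorem dom_P {m U a b} (ha : Sm a) (hb : Sm b) : Dom U (fun w => Plin m a b w) (Q0 m a b) := by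
  refine ⟨1, zero_le_one, fun w hw => ⟨Plin_TF ha hb hw, ?_⟩⟩
  unfold Q0
  linarith [Nm_nonneg (Plin m a b w), Nm_nonneg w, Nm_nonneg (pdx w),
    Nm_nonneg (fun p => p.1 ^ (m + 1) * pdt w p)]

theorem dom_id {m U a b} : Dom U (fun w => w) (Q0 m a b) := by
  refine ⟨1, zero_le_one, fun w hw => ⟨hw, ?_⟩⟩
  unfold Q0
  linarith [Nm_nonneg (Plin m a b w), Nm_nonneg w, Nm_nonneg (pdx w),
    Nm_nonneg (fun p => p.1 ^ (m + 1) * pdt w p)]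

theorem dom_x {m U a b} : Dom U (fun w => pdx w) (Q0 m a b) := by
  refine ⟨1, zero_le_one, fun w hw => ⟨hw.dx, ?_⟩⟩
  unfold Q0
  linarith [Nm_nonneg (Plin m a b w), Nm_nonneg w, Nm_nonneg (pdx w),
    Nm_nonneg (fun p => p.1 ^ (m + 1) * pdt w p)]

theorem dom_t {m U a b} : Dom U (fun w p => p.1 ^ (m + 1) * pdt w p) (Q0 m a b) := by
  refine ⟨1, zero_le_one, fun w hw => ⟨TF.mul_left (Sm_pow _) hw.dt, ?_⟩⟩
  unfold Q0
  linarith [Nm_nonneg (Plin m a b w), Nm_nonneg w, Nm_nonneg (pdx w),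
    Nm_nonneg (fun p => p.1 ^ (m + 1) * pdt w p)]

theorem local_est (m : ℕ) {U : Set (ℝ × ℝ)} (hU : Bornology.IsBounded U) {a b : ℝ × ℝ → ℝ}
    (ha : Sm a) (hb : Sm b) (ha1 : ∀ p, 1 ≤ a p) (q : ℝ × ℝ) :
    ∃ S ∈ nhds q, ∃ C : ℝ, ∀ w, TF U w → ∫ p in S, dens m w p ≤ C * Q0 m a b w ^ 2 := by
  obtain ⟨C0, hC0, hce⟩ := const_est m
  set ε : ℝ := 1 / (2 * C0) with hε
  have hε0 : 0 < ε := by positivity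
  obtain ⟨δ, hδ, hδa⟩ := Metric.continuous_iff.1 ha.continuous q ε hε0
  let χ : ContDiffBump q := ⟨δ / 4, δ / 2, by linarith, by linarith⟩
  have hχ : Sm χ := χ.contDiff
  have hχ1 : ∀ p ∈ Metric.ball q (δ / 4), χ p = 1 := fun p hp =>
    χ.one_of_mem_closedBall (Metric.ball_subset_closedBall hp)
  have hχ0 : ∀ p, p ∉ Metric.ball q δ → χ p = 0 := fun p hp =>
    χ.zero_of_le_dist (by
      have : δ ≤ dist p q := by simpa using hp
      show δ / 2 ≤ dist p q
      linarith)
  have hD : Dom U (fun w p => χ p * Plin m a b w p + ((((-1) * (χ p * b p)) * (p.1 ^ (m + 1) * pdt w p))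
      + ((2 * pdx χ p) * pdx w p + ((pdx (pdx χ) p * w p) +
        ((2 * p.1 ^ (m + 1) * a p * pdt χ p) * (p.1 ^ (m + 1) * pdt w p)
        + (p.1 ^ (2 * m + 2) * a p * pdt (pdt χ) p) * w p))))) (Q0 m a b) := by
    refine (Dom.mul hU hχ (dom_P ha hb)).add ((Dom.mul hU ((Sm.cst _).mul (hχ.mul hb)) dom_t).add
      ((Dom.mul hU ((Sm.cst 2).mul hχ.dx) dom_x).add ((Dom.mul hU hχ.dx.dx dom_id).add
      ((Dom.mul hU ((((Sm.cst 2).mul (Sm_pow _)).mul ha).mul hχ.dt) dom_t).add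
      (Dom.mul hU (((Sm_pow _).mul ha).mul hχ.dt.dt) dom_id)))))
  obtain ⟨M, hM, hD⟩ := hD
  refine ⟨Metric.ball q (δ / 4), Metric.ball_mem_nhds _ (by linarith), 4 * (2 * C0 * M) ^ 2,
    fun w hw => ?_⟩
  set z : ℝ × ℝ → ℝ := fun p => χ p * w p with hz
  have tz : TF U z := TF.mul_left hχ hw
  have eqz : ∀ p ∈ Metric.ball q (δ / 4), w p = z p := fun p hp => by simp [hz, hχ1 p hp]
  have hB := Metric.isOpen_ball (x := q) (ε := δ / 4)
  have ex := pdx_congr_open hB eqz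
  have exx := pdx_congr_open hB ex
  have et := pdt_congr_open hB eqz
  have ext := pdx_congr_open hB et
  have ett := pdt_congr_open hB et
  have step1 : ∫ p in Metric.ball q (δ / 4), dens m w p ≤ ∫ p, dens m z p := by
    have : ∫ p in Metric.ball q (δ / 4), dens m w p = ∫ p in Metric.ball q (δ / 4), dens m z p := by
      apply setIntegral_congr_fun measurableSet_ball
      intro p hp
      simp only [dens, exx p hp, et p hp, ext p hp, ett p hp]
    rw [this]
    exact setIntegral_le_integral (dens_int m tz.toCS) (Filter.Eventually.of_forall (dens_nonneg m z))
  have hzx : pdx z = fun p => pdx χ p * w p + χ p * pdx w p := pdx_mul hχ hw.sm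
  have hzt : pdt z = fun p => pdt χ p * w p + χ p * pdt w p := pdt_mul hχ hw.sm
  have hzxx : pdx (pdx z) = fun p => (pdx (pdx χ) p * w p + pdx χ p * pdx w p)
      + (pdx χ p * pdx w p + χ p * pdx (pdx w) p) := by
    rw [hzx, pdx_add (hχ.dx.mul hw.sm) (hχ.mul hw.sm.dx), pdx_mul hχ.dx hw.sm, pdx_mul hχ hw.sm.dx]
  have hztt : pdt (pdt z) = fun p => (pdt (pdt χ) p * w p + pdt χ p * pdt w p)
      + (pdt χ p * pdt w p + χ p * pdt (pdt w) p) := by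
    rw [hzt, pdt_add (hχ.dt.mul hw.sm) (hχ.mul hw.sm.dt), pdt_mul hχ.dt hw.sm, pdt_mul hχ hw.sm.dt]
  set G : ℝ × ℝ → ℝ := _ with hG
  have hDw : TF U G ∧ Nm G ≤ M * Q0 m a b w := hD w hw
  have hs1 : 1 ≤ Real.sqrt (a q) := by rw [Real.one_le_sqrt]; exact ha1 q
  have hs2 : Real.sqrt (a q) ^ 2 = a q := Real.sq_sqrt (by linarith [ha1 q])
  have main := hce _ hs1 z tz.toCS
  rw [hs2] at main
  set N4 := Nm (fun p => p.1 ^ (2 * m + 2) * pdt (pdt z) p) with hN4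
  have tE : TF U (fun p => (a q + (-1) * a p) * (p.1 ^ (2 * m + 2) * pdt (pdt z) p)) :=
    TF.mul_left ((Sm.cst _).add ((Sm.cst _).mul ha)) (TF.mul_left (Sm_pow _) tz.dt.dt)
  have eP : (fun p => pdx (pdx z) p + (a q * p.1 ^ (2 * m + 2)) * pdt (pdt z) p)
      = fun p => G p + (a q + (-1) * a p) * (p.1 ^ (2 * m + 2) * pdt (pdt z) p) := by
    funext p
    rw [hzxx, hztt]
    simp only [hG, Plin]
    ring
  have hzout : ∀ p, p ∉ Metric.ball q δ → pdt (pdt z) p = 0 := by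
    have hsub : tsupport z ⊆ Metric.closedBall q (δ / 2) := by
      have h1 : tsupport z ⊆ tsupport χ := tsupport_mul_subset_left
      rwa [χ.tsupport_eq] at h1
    intro p hp
    apply image_eq_zero_of_notMem_tsupport
    intro h2
    have := hsub (tsupport_pdt tz.sm (tsupport_pdt tz.sm.dt h2))
    apply hp
    rw [Metric.mem_closedBall] at this
    rw [Metric.mem_ball]
    linarith
  have hE : Nm (fun p => (a q + (-1) * a p) * (p.1 ^ (2 * m + 2) * pdt (pdt z) p)) ≤ ε * N4 := by
    apply Nm_le_of_abs tE.toCS (TF.mul_left (Sm_pow _) tz.dt.dt).toCS hε0.le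
    intro p
    rw [abs_mul]
    by_cases hp : p ∈ Metric.ball q δ
    · apply mul_le_mul_of_nonneg_right _ (abs_nonneg _)
      have := hδa p hp
      rw [Real.dist_eq, abs_sub_comm] at this
      have e : a q + (-1) * a p = a q - a p := by ring
      rw [e]; exact this.le
    · rw [hzout p hp]; simp
  have tr := CS.tri hDw.1.toCS tE.toCS
  rw [eP] at main
  have hx : C0 * (ε * N4) = N4 / 2 := by rw [hε]; field_simp
  have n1 := Nm_nonneg (pdx (pdx z))
  have n2 := Nm_nonneg (fun p => p.1 ^ (m + 1) * pdx (pdt z) p)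
  have n3 := Nm_nonneg (fun p => p.1 ^ m * pdt z p)
  have n4 : 0 ≤ N4 := Nm_nonneg _
  have fin := mul_le_mul_of_nonneg_left (tr.trans (add_le_add hDw.2 hE)) hC0.le
  have fin2 := main.trans fin
  rw [mul_add, hx] at fin2
  have q0 := Q0_nonneg m a b w
  have key : ∀ y : ℝ, 0 ≤ y → y ≤ 2 * C0 * M * Q0 m a b w → y ^ 2 ≤ (2 * C0 * M) ^ 2 * Q0 m a b w ^ 2 := by
    intro y hy hy2
    rw [← mul_pow]
    exact pow_le_pow_left₀ hy hy2 2
  refine step1.trans ?_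
  rw [dens_integral m tz.toCS]
  have k1 := key _ n1 (by nlinarith)
  have k2 := key _ n2 (by nlinarith)
  have k3 := key _ n3 (by nlinarith)
  have k4 := key _ n4 (by nlinarith)
  linarith

theorem A0sq (m : ℕ) {U : Set (ℝ × ℝ)} (hU : Bornology.IsBounded U) {a b : ℝ × ℝ → ℝ}
    (ha : Sm a) (hb : Sm b) (ha1 : ∀ p, 1 ≤ a p) :
    ∃ C : ℝ, ∀ w, TF U w → ∫ p, dens m w p ≤ C * Q0 m a b w ^ 2 := by
  have ind : ∃ C : ℝ, ∀ w, TF U w → ∫ p in closure U, dens m w p ≤ C * Q0 m a b w ^ 2 := by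
    apply hU.isCompact_closure.induction_on
      (p := fun S => ∃ C : ℝ, ∀ w, TF U w → ∫ p in S, dens m w p ≤ C * Q0 m a b w ^ 2)
    · exact ⟨0, fun w _ => by simp⟩
    · rintro s t hst ⟨C, hC⟩
      refine ⟨C, fun w hw => le_trans ?_ (hC w hw)⟩
      exact setIntegral_mono_set (dens_int m hw.toCS).integrableOn
        (Filter.Eventually.of_forall (dens_nonneg m w)) hst.eventuallyLE
    · rintro s t ⟨C, hC⟩ ⟨D, hD⟩
      refine ⟨C + D, fun w hw => ?_⟩
      have i := dens_int m hw.toCS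
      have h1 : ∫ p in s ∪ t, dens m w p ≤ ∫ p, dens m w p ∂(volume.restrict s + volume.restrict t) :=
        integral_mono_measure (Measure.restrict_union_le s t)
          (Filter.Eventually.of_forall (dens_nonneg m w)) (Integrable.add_measure i.integrableOn i.integrableOn)
      rw [integral_add_measure i.integrableOn i.integrableOn] at h1
      have := hC w hw
      have := hD w hw
      linarith
    · intro q _
      obtain ⟨S, hS, h⟩ := local_est m hU ha hb ha1 q
      exact ⟨S, mem_nhdsWithin_of_mem_nhds hS, h⟩
  obtain ⟨C, hC⟩ := ind
  refine ⟨C, fun w hw => ?_⟩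
  have : ∫ p in closure U, dens m w p = ∫ p, dens m w p := by
    apply setIntegral_eq_integral_of_forall_compl_eq_zero
    intro p hp
    have hp' : p ∉ U := fun h => hp (subset_closure h)
    simp [dens, hw.dx.dx.zero hp', hw.dt.zero hp', hw.dt.dx.zero hp', hw.dt.dt.zero hp']
  rw [← this]; exact hC w hw

theorem A0 (m : ℕ) {U : Set (ℝ × ℝ)} (hU : Bornology.IsBounded U) {a b : ℝ × ℝ → ℝ}
    (ha : Sm a) (hb : Sm b) (ha1 : ∀ p, 1 ≤ a p) :
    ∃ C : ℝ, 0 ≤ C ∧ ∀ w, TF U w → Nm (pdx (pdx w)) ≤ C * Q0 m a b w ∧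
      Nm (fun p => p.1 ^ (m + 1) * pdx (pdt w) p) ≤ C * Q0 m a b w ∧
      Nm (fun p => p.1 ^ m * pdt w p) ≤ C * Q0 m a b w ∧
      Nm (fun p => p.1 ^ (2 * m + 2) * pdt (pdt w) p) ≤ C * Q0 m a b w := by
  obtain ⟨C, hC⟩ := A0sq m hU ha hb ha1
  refine ⟨Real.sqrt (max C 0), Real.sqrt_nonneg _, fun w hw => ?_⟩
  have h := hC w hw
  rw [dens_integral m hw.toCS] at h
  have q0 := Q0_nonneg m a b w
  have h2 : C * Q0 m a b w ^ 2 ≤ max C 0 * Q0 m a b w ^ 2 :=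
    mul_le_mul_of_nonneg_right (le_max_left _ _) (sq_nonneg _)
  have key : ∀ y : ℝ, y ^ 2 ≤ C * Q0 m a b w ^ 2 → y ≤ Real.sqrt (max C 0) * Q0 m a b w := by
    intro y hy
    apply le_of_sq_le_sq _ (mul_nonneg (Real.sqrt_nonneg _) q0)
    rw [mul_pow, Real.sq_sqrt (le_max_right _ _)]; linarith
  have n1 := sq_nonneg (Nm (pdx (pdx w)))
  have n2 := sq_nonneg (Nm (fun p => p.1 ^ (m + 1) * pdx (pdt w) p))
  have n3 := sq_nonneg (Nm (fun p => p.1 ^ m * pdt w p))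
  have n4 := sq_nonneg (Nm (fun p => p.1 ^ (2 * m + 2) * pdt (pdt w) p))
  exact ⟨key _ (by linarith), key _ (by linarith), key _ (by linarith), key _ (by linarith)⟩

/-! ### Sobolev sums and commutators -/

noncomputable def H2s (f : ℝ × ℝ → ℝ) : ℝ :=
  Nm f + Nm (pdx f) + Nm (pdt f) + Nm (pdx (pdx f)) + Nm (pdx (pdt f)) + Nm (pdt (pdt f))

theorem H2s_le (f : ℝ × ℝ → ℝ) : Nm f ≤ H2s f ∧ Nm (pdx f) ≤ H2s f ∧ Nm (pdt f) ≤ H2s f ∧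
    Nm (pdx (pdx f)) ≤ H2s f ∧ Nm (pdx (pdt f)) ≤ H2s f ∧ Nm (pdt (pdt f)) ≤ H2s f ∧ 0 ≤ H2s f := by
  have h0 := Nm_nonneg f
  have h1 := Nm_nonneg (pdx f)
  have h2 := Nm_nonneg (pdt f)
  have h3 := Nm_nonneg (pdx (pdx f))
  have h4 := Nm_nonneg (pdx (pdt f))
  have h5 := Nm_nonneg (pdt (pdt f))
  unfold H2s
  refine ⟨?_, ?_, ?_, ?_, ?_, ?_, ?_⟩ <;> linarith

def DomH (U : Set (ℝ × ℝ)) (F : (ℝ × ℝ → ℝ) → (ℝ × ℝ → ℝ)) (Q : (ℝ × ℝ → ℝ) → ℝ) : Prop :=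
  ∃ C : ℝ, 0 ≤ C ∧ ∀ v, TF U v → TF U (F v) ∧ H2s (F v) ≤ C * Q v

theorem DomH.of_le {U F Q} (hF : ∀ v, TF U v → TF U (F v)) (h : ∀ v, TF U v → H2s (F v) ≤ Q v) :
    DomH U F Q :=
  ⟨1, zero_le_one, fun v hv => ⟨hF v hv, by rw [one_mul]; exact h v hv⟩⟩

theorem Dom.of_le {U F Q} (hF : ∀ v, TF U v → TF U (F v)) (h : ∀ v, TF U v → Nm (F v) ≤ Q v) :
    Dom U F Q :=
  ⟨1, zero_le_one, fun v hv => ⟨hF v hv, by rw [one_mul]; exact h v hv⟩⟩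

theorem DomH.d0 {U F Q} (h : DomH U F Q) : Dom U F Q := by
  obtain ⟨C, hC, k⟩ := h
  exact ⟨C, hC, fun v hv => ⟨(k v hv).1, (H2s_le _).1.trans (k v hv).2⟩⟩

theorem DomH.dx {U F Q} (h : DomH U F Q) : Dom U (fun v => pdx (F v)) Q := by
  obtain ⟨C, hC, k⟩ := h
  exact ⟨C, hC, fun v hv => ⟨(k v hv).1.dx, (H2s_le _).2.1.trans (k v hv).2⟩⟩

theorem DomH.dt {U F Q} (h : DomH U F Q) : Dom U (fun v => pdt (F v)) Q := by
  obtain ⟨C, hC, k⟩ := h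
  exact ⟨C, hC, fun v hv => ⟨(k v hv).1.dt, (H2s_le _).2.2.1.trans (k v hv).2⟩⟩

theorem DomH.dxx {U F Q} (h : DomH U F Q) : Dom U (fun v => pdx (pdx (F v))) Q := by
  obtain ⟨C, hC, k⟩ := h
  exact ⟨C, hC, fun v hv => ⟨(k v hv).1.dx.dx, (H2s_le _).2.2.2.1.trans (k v hv).2⟩⟩

theorem DomH.dxt {U F Q} (h : DomH U F Q) : Dom U (fun v => pdx (pdt (F v))) Q := by
  obtain ⟨C, hC, k⟩ := h
  exact ⟨C, hC, fun v hv => ⟨(k v hv).1.dt.dx, (H2s_le _).2.2.2.2.1.trans (k v hv).2⟩⟩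

theorem DomH.dtt {U F Q} (h : DomH U F Q) : Dom U (fun v => pdt (pdt (F v))) Q := by
  obtain ⟨C, hC, k⟩ := h
  exact ⟨C, hC, fun v hv => ⟨(k v hv).1.dt.dt, (H2s_le _).2.2.2.2.2.1.trans (k v hv).2⟩⟩

theorem DomH.mk6 {U F Q} (h0 : Dom U F Q) (h1 : Dom U (fun v => pdx (F v)) Q)
    (h2 : Dom U (fun v => pdt (F v)) Q) (h3 : Dom U (fun v => pdx (pdx (F v))) Q)
    (h4 : Dom U (fun v => pdx (pdt (F v))) Q) (h5 : Dom U (fun v => pdt (pdt (F v))) Q) :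
    DomH U F Q := by
  obtain ⟨C0, c0, k0⟩ := h0
  obtain ⟨C1, c1, k1⟩ := h1
  obtain ⟨C2, c2, k2⟩ := h2
  obtain ⟨C3, c3, k3⟩ := h3
  obtain ⟨C4, c4, k4⟩ := h4
  obtain ⟨C5, c5, k5⟩ := h5
  refine ⟨C0 + C1 + C2 + C3 + C4 + C5, by positivity, fun v hv => ⟨(k0 v hv).1, ?_⟩⟩
  have := (k0 v hv).2
  have := (k1 v hv).2
  have := (k2 v hv).2
  have := (k3 v hv).2
  have := (k4 v hv).2
  have := (k5 v hv).2
  unfold H2s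
  linarith

theorem DomH.add {U F G Q} (hF : DomH U F Q) (hG : DomH U G Q) :
    DomH U (fun v p => F v p + G v p) Q := by
  have sF : ∀ v, TF U v → Sm (F v) := fun v hv => by
    obtain ⟨C, hC, k⟩ := hF; exact (k v hv).1.sm
  have sG : ∀ v, TF U v → Sm (G v) := fun v hv => by
    obtain ⟨C, hC, k⟩ := hG; exact (k v hv).1.sm
  refine DomH.mk6 (hF.d0.add hG.d0) ((hF.dx.add hG.dx).congr ?_) ((hF.dt.add hG.dt).congr ?_)
    ((hF.dxx.add hG.dxx).congr ?_) ((hF.dxt.add hG.dxt).congr ?_) ((hF.dtt.add hG.dtt).congr ?_) <;>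
  intro v hv p
  · rw [pdx_add (sF v hv) (sG v hv)]
  · rw [pdt_add (sF v hv) (sG v hv)]
  · rw [pdx_add (sF v hv) (sG v hv), pdx_add (sF v hv).dx (sG v hv).dx]
  · rw [pdt_add (sF v hv) (sG v hv), pdx_add (sF v hv).dt (sG v hv).dt]
  · rw [pdt_add (sF v hv) (sG v hv), pdt_add (sF v hv).dt (sG v hv).dt]

theorem dmul_xx {c f : ℝ × ℝ → ℝ} (hc : Sm c) (hf : Sm f) : pdx (pdx (fun p => c p * f p)) =
    fun p => pdx (pdx c) p * f p + ((2 * pdx c p) * pdx f p + c p * pdx (pdx f) p) := by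
  rw [pdx_mul hc hf, pdx_add (hc.dx.mul hf) (hc.mul hf.dx), pdx_mul hc.dx hf, pdx_mul hc hf.dx]
  funext p; ring

theorem dmul_xt {c f : ℝ × ℝ → ℝ} (hc : Sm c) (hf : Sm f) : pdx (pdt (fun p => c p * f p)) =
    fun p => pdx (pdt c) p * f p + (pdt c p * pdx f p + (pdx c p * pdt f p + c p * pdx (pdt f) p)) := by
  rw [pdt_mul hc hf, pdx_add (hc.dt.mul hf) (hc.mul hf.dt), pdx_mul hc.dt hf, pdx_mul hc hf.dt]
  funext p; ring

theorem dmul_tt {c f : ℝ × ℝ → ℝ} (hc : Sm c) (hf : Sm f) : pdt (pdt (fun p => c p * f p)) =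
    fun p => pdt (pdt c) p * f p + ((2 * pdt c p) * pdt f p + c p * pdt (pdt f) p) := by
  rw [pdt_mul hc hf, pdt_add (hc.dt.mul hf) (hc.mul hf.dt), pdt_mul hc.dt hf, pdt_mul hc hf.dt]
  funext p; ring

theorem DomH.mul {U F Q} (hU : Bornology.IsBounded U) {c : ℝ × ℝ → ℝ} (hc : Sm c) (hF : DomH U F Q) :
    DomH U (fun v p => c p * F v p) Q := by
  have sF : ∀ v, TF U v → Sm (F v) := fun v hv => by
    obtain ⟨C, hC, k⟩ := hF; exact (k v hv).1.sm
  refine DomH.mk6 (hF.d0.mul hU hc) (((hF.d0.mul hU hc.dx).add (hF.dx.mul hU hc)).congr ?_)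
    (((hF.d0.mul hU hc.dt).add (hF.dt.mul hU hc)).congr ?_)
    (((hF.d0.mul hU hc.dx.dx).add ((hF.dx.mul hU ((Sm.cst 2).mul hc.dx)).add
      (hF.dxx.mul hU hc))).congr ?_)
    (((hF.d0.mul hU hc.dt.dx).add ((hF.dx.mul hU hc.dt).add ((hF.dt.mul hU hc.dx).add
      (hF.dxt.mul hU hc)))).congr ?_)
    (((hF.d0.mul hU hc.dt.dt).add ((hF.dt.mul hU ((Sm.cst 2).mul hc.dt)).add
      (hF.dtt.mul hU hc))).congr ?_) <;>
  intro v hv p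
  · rw [pdx_mul hc (sF v hv)]
  · rw [pdt_mul hc (sF v hv)]
  · rw [dmul_xx hc (sF v hv)]
  · rw [dmul_xt hc (sF v hv)]
  · rw [dmul_tt hc (sF v hv)]

theorem DomH.congr {U F G Q} (hF : DomH U F Q) (h : ∀ v, TF U v → ∀ p, G v p = F v p) :
    DomH U G Q := by
  obtain ⟨C, hC, k⟩ := hF
  refine ⟨C, hC, fun v hv => ?_⟩
  have e : G v = F v := funext (h v hv)
  rw [e]; exact k v hv

theorem pdt_pow (n : ℕ) : pdt (fun p : ℝ × ℝ => p.1 ^ n) = fun _ => 0 := by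
  funext p; simp [pdt]

theorem pdx_pow (n : ℕ) : pdx (fun p : ℝ × ℝ => p.1 ^ (n + 1)) = fun p : ℝ × ℝ => ((n : ℝ) + 1) * p.1 ^ n := by
  funext p; simp [pdx]

theorem pdx_zero : pdx (fun _ => (0 : ℝ)) = fun _ => 0 := by
  funext p; simp [pdx]

theorem pdt_zero : pdt (fun _ => (0 : ℝ)) = fun _ => 0 := by
  funext p; simp [pdt]

/-- the field `X₂` -/
noncomputable def Y (m : ℕ) (v : ℝ × ℝ → ℝ) : ℝ × ℝ → ℝ := fun p => p.1 ^ (m + 1) * pdt v p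

theorem TF.Y {U v} (m : ℕ) (hv : TF U v) : TF U (Y m v) := TF.mul_left (Sm_pow _) hv.dt

theorem YY_eq (m : ℕ) {v : ℝ × ℝ → ℝ} (hv : Sm v) :
    Y m (Y m v) = fun p => p.1 ^ (2 * m + 2) * pdt (pdt v) p := by
  unfold Y
  rw [pdt_mul (Sm_pow _) hv.dt, pdt_pow]
  funext p; ring

theorem xY_eq (m : ℕ) {v : ℝ × ℝ → ℝ} (hv : Sm v) :
    pdx (Y m v) = fun p => ((m : ℝ) + 1) * (p.1 ^ m * pdt v p) + p.1 ^ (m + 1) * pdx (pdt v) p := by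
  unfold Y
  rw [pdx_mul (Sm_pow _) hv.dt, pdx_pow]
  funext p; ring

theorem Yx_eq (m : ℕ) {v : ℝ × ℝ → ℝ} (hv : Sm v) :
    Y m (pdx v) = fun p => p.1 ^ (m + 1) * pdx (pdt v) p := by
  unfold Y
  rw [pdt_pdx hv]

noncomputable def Ls (m : ℕ) (v : ℝ × ℝ → ℝ) : ℝ := H2s v + H2s (pdx v) + H2s (Y m v)

noncomputable def S2s (m : ℕ) (v : ℝ × ℝ → ℝ) : ℝ :=
  H2s (pdx (pdx v)) + H2s (pdx (Y m v)) + H2s (Y m (pdx v)) + H2s (Y m (Y m v))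

theorem Ls_le (m : ℕ) (v) : H2s v ≤ Ls m v ∧ H2s (pdx v) ≤ Ls m v ∧ H2s (Y m v) ≤ Ls m v ∧
    0 ≤ Ls m v := by
  have h1 := (H2s_le v).2.2.2.2.2.2
  have h2 := (H2s_le (pdx v)).2.2.2.2.2.2
  have h3 := (H2s_le (Y m v)).2.2.2.2.2.2
  unfold Ls
  refine ⟨?_, ?_, ?_, ?_⟩ <;> linarith

theorem S2s_le (m : ℕ) (v) : H2s (pdx (pdx v)) ≤ S2s m v ∧ H2s (pdx (Y m v)) ≤ S2s m v ∧
    H2s (Y m (pdx v)) ≤ S2s m v ∧ H2s (Y m (Y m v)) ≤ S2s m v ∧ 0 ≤ S2s m v := by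
  have h1 := (H2s_le (pdx (pdx v))).2.2.2.2.2.2
  have h2 := (H2s_le (pdx (Y m v))).2.2.2.2.2.2
  have h3 := (H2s_le (Y m (pdx v))).2.2.2.2.2.2
  have h4 := (H2s_le (Y m (Y m v))).2.2.2.2.2.2
  unfold S2s
  refine ⟨?_, ?_, ?_, ?_, ?_⟩ <;> linarith

section atoms
variable {m : ℕ} {U : Set (ℝ × ℝ)} {Q : (ℝ × ℝ → ℝ) → ℝ}

theorem atH0 (hQ : ∀ v, Ls m v ≤ Q v) : DomH U (fun v => v) Q :=
  DomH.of_le (fun _ hv => hv) fun v _ => (Ls_le m v).1.trans (hQ v)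

theorem atH1 (hQ : ∀ v, Ls m v ≤ Q v) : DomH U (fun v => pdx v) Q :=
  DomH.of_le (fun _ hv => hv.dx) fun v _ => (Ls_le m v).2.1.trans (hQ v)

theorem atHY (hQ : ∀ v, Ls m v ≤ Q v) : DomH U (fun v => Y m v) Q :=
  DomH.of_le (fun _ hv => hv.Y m) fun v _ => (Ls_le m v).2.2.1.trans (hQ v)

theorem at21 (hQ : ∀ v, Ls m v ≤ Q v) : Dom U (fun v => pdx (pdx (pdt v))) Q :=
  (atH1 hQ).dxt.congr fun v hv p => by rw [pdt_pdx hv.sm]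

theorem at12 (hQ : ∀ v, Ls m v ≤ Q v) : Dom U (fun v => pdx (pdt (pdt v))) Q :=
  (atH1 hQ).dtt.congr fun v hv p => by rw [pdt_pdx hv.sm, pdt_pdx hv.sm.dt]

theorem aty01 (hQ : ∀ v, Ls m v ≤ Q v) : Dom U (fun v p => p.1 ^ (m + 1) * pdt v p) Q :=
  (atHY hQ).d0

theorem aty03 (hQ : ∀ v, Ls m v ≤ Q v) :
    Dom U (fun v p => p.1 ^ (m + 1) * pdt (pdt (pdt v)) p) Q :=
  (atHY hQ).dtt.congr fun v hv p => by
    unfold Y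
    rw [dmul_tt (Sm_pow _) hv.sm.dt, pdt_pow]; simp [pdt_zero]

end atoms

section commute
variable {m : ℕ} {U : Set (ℝ × ℝ)} {a b : ℝ × ℝ → ℝ}

noncomputable def cA (m : ℕ) (a : ℝ × ℝ → ℝ) : ℝ × ℝ → ℝ := fun p => p.1 ^ (2 * m + 2) * a p
noncomputable def cB (m : ℕ) (b : ℝ × ℝ → ℝ) : ℝ × ℝ → ℝ := fun p => b p * p.1 ^ (m + 1)

theorem cA_sm (ha : Sm a) : Sm (cA m a) := (Sm_pow _).mul ha
theorem cB_sm (hb : Sm b) : Sm (cB m b) := hb.mul (Sm_pow _)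

theorem cA_x (ha : Sm a) : pdx (cA m a) = fun p => ((2 * (m : ℝ) + 2) * p.1 ^ m * a p
    + p.1 ^ (m + 1) * pdx a p) * p.1 ^ (m + 1) := by
  unfold cA
  rw [pdx_mul (Sm_pow _) ha, show 2 * m + 2 = (2 * m + 1) + 1 from rfl, pdx_pow]
  funext p; push_cast; ring

theorem cA_t (ha : Sm a) : pdt (cA m a) = fun p => (p.1 ^ (m + 1) * pdt a p) * p.1 ^ (m + 1) := by
  unfold cA
  rw [pdt_mul (Sm_pow _) ha, pdt_pow]
  funext p; ring

theorem Plin_eq (v : ℝ × ℝ → ℝ) : Plin m a b v =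
    fun p => pdx (pdx v) p + (cA m a p * pdt (pdt v) p + cB m b p * pdt v p) := by
  funext p; simp only [Plin, cA, cB]; ring

noncomputable def Rs (m : ℕ) (a b : ℝ × ℝ → ℝ) (v : ℝ × ℝ → ℝ) : ℝ := H2s (Plin m a b v) + Ls m v

theorem Rs_ge (v) : Ls m v ≤ Rs m a b v := by
  unfold Rs; linarith [(H2s_le (Plin m a b v)).2.2.2.2.2.2]

theorem dP (ha : Sm a) (hb : Sm b) : DomH U (fun v => Plin m a b v) (Rs m a b) :=
  DomH.of_le (fun _ hv => Plin_TF ha hb hv) fun v _ => by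
    unfold Rs; linarith [(Ls_le m v).2.2.2]

theorem dPx (hU : Bornology.IsBounded U) (ha : Sm a) (hb : Sm b) :
    Dom U (fun v => Plin m a b (pdx v)) (Rs m a b) := by
  have hA := cA_sm (m := m) ha
  have hB := cB_sm (m := m) hb
  have A0 := atH0 (U := U) (Rs_ge (m := m) (a := a) (b := b))
  refine ((dP ha hb).dx.add ((A0.dtt.mul hU ((Sm.cst (-1)).mul hA.dx)).add
    (A0.dt.mul hU ((Sm.cst (-1)).mul hB.dx)))).congr fun v hv p => ?_
  have s := hv.sm
  rw [Plin_eq, Plin_eq, pdx_add s.dx.dx ((hA.mul s.dt.dt).add (hB.mul s.dt)),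
    pdx_add (hA.mul s.dt.dt) (hB.mul s.dt), pdx_mul hA s.dt.dt, pdx_mul hB s.dt, pdt_pdx s,
    pdt_pdx s.dt]
  ring

theorem dPt (hU : Bornology.IsBounded U) (ha : Sm a) (hb : Sm b) :
    Dom U (fun v => Plin m a b (pdt v)) (Rs m a b) := by
  have hA := cA_sm (m := m) ha
  have hB := cB_sm (m := m) hb
  have A0 := atH0 (U := U) (Rs_ge (m := m) (a := a) (b := b))
  refine ((dP ha hb).dt.add ((A0.dtt.mul hU ((Sm.cst (-1)).mul hA.dt)).add
    (A0.dt.mul hU ((Sm.cst (-1)).mul hB.dt)))).congr fun v hv p => ?_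
  have s := hv.sm
  rw [Plin_eq, Plin_eq, pdt_add s.dx.dx ((hA.mul s.dt.dt).add (hB.mul s.dt)),
    pdt_add (hA.mul s.dt.dt) (hB.mul s.dt), pdt_mul hA s.dt.dt, pdt_mul hB s.dt, pdt_pdx s.dx,
    pdt_pdx s]
  ring

theorem dPxx (hU : Bornology.IsBounded U) (ha : Sm a) (hb : Sm b) :
    Dom U (fun v => Plin m a b (pdx (pdx v))) (Rs m a b) := by
  have hA := cA_sm (m := m) ha
  have hB := cB_sm (m := m) hb
  have hR := Rs_ge (m := m) (a := a) (b := b)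
  have A0 := atH0 (U := U) hR
  refine ((dP ha hb).dxx.add (((A0.dtt.mul hU ((Sm.cst (-1)).mul hA.dx.dx)).add
    ((at12 hR).mul hU ((Sm.cst (-2)).mul hA.dx))).add
    ((A0.dt.mul hU ((Sm.cst (-1)).mul hB.dx.dx)).add
      (A0.dxt.mul hU ((Sm.cst (-2)).mul hB.dx))))).congr fun v hv p => ?_
  have s := hv.sm
  have e1 := (hA.mul s.dt.dt)
  have e2 := (hB.mul s.dt)
  rw [Plin_eq, Plin_eq, pdx_add s.dx.dx (e1.add e2), pdx_add s.dx.dx.dx (e1.add e2).dx,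
    pdx_add e1 e2, pdx_add e1.dx e2.dx, dmul_xx hA s.dt.dt, dmul_xx hB s.dt, pdt_pdx s.dx, pdt_pdx s,
    pdt_pdx s.dt.dx, pdt_pdx s.dt]
  ring

theorem dPxt (hU : Bornology.IsBounded U) (ha : Sm a) (hb : Sm b) :
    Dom U (fun v => Plin m a b (pdx (pdt v))) (Rs m a b) := by
  have hA := cA_sm (m := m) ha
  have hB := cB_sm (m := m) hb
  have hR := Rs_ge (m := m) (a := a) (b := b)
  have A0 := atH0 (U := U) hR
  refine ((dP ha hb).dxt.add (((A0.dtt.mul hU ((Sm.cst (-1)).mul hA.dt.dx)).add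
    (((at12 hR).mul hU ((Sm.cst (-1)).mul hA.dt)).add
    ((aty03 hR).mul hU ((Sm.cst (-1)).mul ((((Sm.cst (2 * (m : ℝ) + 2)).mul (Sm_pow m)).mul ha).add
      ((Sm_pow (m + 1)).mul ha.dx)))))).add
    ((A0.dt.mul hU ((Sm.cst (-1)).mul hB.dt.dx)).add
      ((A0.dxt.mul hU ((Sm.cst (-1)).mul hB.dt)).add
      (A0.dtt.mul hU ((Sm.cst (-1)).mul hB.dx)))))).congr fun v hv p => ?_
  have s := hv.sm
  have e1 := (hA.mul s.dt.dt)
  have e2 := (hB.mul s.dt)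
  rw [Plin_eq, Plin_eq, pdt_add s.dx.dx (e1.add e2), pdx_add s.dx.dx.dt (e1.add e2).dt,
    pdt_add e1 e2, pdx_add e1.dt e2.dt, dmul_xt hA s.dt.dt, dmul_xt hB s.dt, pdt_pdx s.dx, pdt_pdx s,
    pdt_pdx s.dt, pdt_pdx s.dt.dt, cA_x ha]
  ring

theorem dPtt (hU : Bornology.IsBounded U) (ha : Sm a) (hb : Sm b) :
    Dom U (fun v => Plin m a b (pdt (pdt v))) (Rs m a b) := by
  have hA := cA_sm (m := m) ha
  have hB := cB_sm (m := m) hb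
  have hR := Rs_ge (m := m) (a := a) (b := b)
  have A0 := atH0 (U := U) hR
  refine ((dP ha hb).dtt.add (((A0.dtt.mul hU ((Sm.cst (-1)).mul hA.dt.dt)).add
    ((aty03 hR).mul hU ((Sm.cst (-2)).mul ((Sm_pow (m + 1)).mul ha.dt)))).add
    ((A0.dt.mul hU ((Sm.cst (-1)).mul hB.dt.dt)).add
      (A0.dtt.mul hU ((Sm.cst (-2)).mul hB.dt))))).congr fun v hv p => ?_
  have s := hv.sm
  have e1 := (hA.mul s.dt.dt)
  have e2 := (hB.mul s.dt)
  rw [Plin_eq, Plin_eq, pdt_add s.dx.dx (e1.add e2), pdt_add s.dx.dx.dt (e1.add e2).dt,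
    pdt_add e1 e2, pdt_add e1.dt e2.dt, dmul_tt hA s.dt.dt, dmul_tt hB s.dt, pdt_pdx s.dx, pdt_pdx s,
    pdt_pdx s.dt.dx, pdt_pdx s.dt, cA_t ha]
  ring

/-- the four controlled quantities -/
structure Four (m : ℕ) (U : Set (ℝ × ℝ)) (F : (ℝ × ℝ → ℝ) → (ℝ × ℝ → ℝ))
    (Q : (ℝ × ℝ → ℝ) → ℝ) : Prop where
  xx : Dom U (fun v => pdx (pdx (F v))) Q
  yxt : Dom U (fun v p => p.1 ^ (m + 1) * pdx (pdt (F v)) p) Q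
  t : Dom U (fun v p => p.1 ^ m * pdt (F v) p) Q
  yytt : Dom U (fun v p => p.1 ^ (2 * m + 2) * pdt (pdt (F v)) p) Q

theorem four (hU : Bornology.IsBounded U) (ha : Sm a) (hb : Sm b) (ha1 : ∀ p, 1 ≤ a p)
    {F Q} (h1 : Dom U (fun v => Plin m a b (F v)) Q) (h2 : Dom U F Q)
    (h3 : Dom U (fun v => pdx (F v)) Q) (h4 : Dom U (fun v p => p.1 ^ (m + 1) * pdt (F v) p) Q) :
    Four m U F Q := by
  obtain ⟨C, hC, hA⟩ := A0 m hU ha hb ha1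
  obtain ⟨C1, c1, k1⟩ := h1
  obtain ⟨C2, c2, k2⟩ := h2
  obtain ⟨C3, c3, k3⟩ := h3
  obtain ⟨C4, c4, k4⟩ := h4
  have key : ∀ v, TF U v → C * Q0 m a b (F v) ≤ (C * (C1 + C2 + C3 + C4)) * Q v := by
    intro v hv
    have : Q0 m a b (F v) ≤ (C1 + C2 + C3 + C4) * Q v := by
      have := (k1 v hv).2
      have := (k2 v hv).2
      have := (k3 v hv).2
      have := (k4 v hv).2
      unfold Q0
      linarith
    have := mul_le_mul_of_nonneg_left this hC
    linarith
  have pos : 0 ≤ C * (C1 + C2 + C3 + C4) := by positivity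
  have tf : ∀ v, TF U v → TF U (F v) := fun v hv => (k2 v hv).1
  refine ⟨⟨_, pos, fun v hv => ⟨(tf v hv).dx.dx, ?_⟩⟩,
    ⟨_, pos, fun v hv => ⟨TF.mul_left (Sm_pow _) (tf v hv).dt.dx, ?_⟩⟩,
    ⟨_, pos, fun v hv => ⟨TF.mul_left (Sm_pow _) (tf v hv).dt, ?_⟩⟩,
    ⟨_, pos, fun v hv => ⟨TF.mul_left (Sm_pow _) (tf v hv).dt.dt, ?_⟩⟩⟩
  · exact (hA _ (tf v hv)).1.trans (key v hv)
  · exact (hA _ (tf v hv)).2.1.trans (key v hv)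
  · exact (hA _ (tf v hv)).2.2.1.trans (key v hv)
  · exact (hA _ (tf v hv)).2.2.2.trans (key v hv)

/-- maximal second order estimate in the Sobolev norms -/
theorem estA (hU : Bornology.IsBounded U) (ha : Sm a) (hb : Sm b) (ha1 : ∀ p, 1 ≤ a p) :
    ∃ C : ℝ, 0 ≤ C ∧ ∀ v, TF U v → S2s m v ≤ C * Rs m a b v := by
  have hR := Rs_ge (m := m) (a := a) (b := b)
  have H0 := atH0 (U := U) hR
  have H1 := atH1 (U := U) hR
  have b21 := at21 (U := U) hR
  have b12 := at12 (U := U) hR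
  have y01 := aty01 (U := U) hR
  have y03 := aty03 (U := U) hR
  have hy := Sm_pow (m + 1)
  have f0 := four hU ha hb ha1 (F := fun v => v) (dP ha hb).d0 H0.d0 H0.dx y01
  have fx := four hU ha hb ha1 (F := fun v => pdx v) (dPx hU ha hb) H0.dx H0.dxx
    ((H0.dxt.mul hU hy).congr fun v hv p => by rw [pdt_pdx hv.sm])
  have ft := four hU ha hb ha1 (F := fun v => pdt v) (dPt hU ha hb) H0.dt H0.dxt
    (H0.dtt.mul hU hy)
  have fxx := four hU ha hb ha1 (F := fun v => pdx (pdx v)) (dPxx hU ha hb) H0.dxx H1.dxx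
    ((b21.mul hU hy).congr fun v hv p => by rw [pdt_pdx hv.sm.dx, pdt_pdx hv.sm])
  have fxt := four hU ha hb ha1 (F := fun v => pdx (pdt v)) (dPxt hU ha hb) H0.dxt b21
    ((b12.mul hU hy).congr fun v hv p => by rw [pdt_pdx hv.sm.dt])
  have ftt := four hU ha hb ha1 (F := fun v => pdt (pdt v)) (dPtt hU ha hb) H0.dtt b12 y03
  -- the first of the four words
  have W1 : DomH U (fun v => pdx (pdx v)) (Rs m a b) := by
    refine DomH.mk6 f0.xx fx.xx (ft.xx.congr ?_) fxx.xx (fxt.xx.congr ?_) (ftt.xx.congr ?_) <;>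
      intro v hv p
    · rw [pdt_pdx hv.sm.dx, pdt_pdx hv.sm]
    · rw [pdt_pdx hv.sm.dx, pdt_pdx hv.sm]
    · rw [pdt_pdx hv.sm.dx, pdt_pdx hv.sm, pdt_pdx hv.sm.dt.dx, pdt_pdx hv.sm.dt]
  have W2 : DomH U (fun v p => p.1 ^ (m + 1) * pdx (pdt v) p) (Rs m a b) := by
    refine DomH.mk6 f0.yxt (((H0.dxt.mul hU hy.dx).add fx.yxt).congr ?_) (ft.yxt.congr ?_)
      (((H0.dxt.mul hU hy.dx.dx).add ((b21.mul hU ((Sm.cst 2).mul hy.dx)).add fxx.yxt)).congr ?_)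
      (((b12.mul hU hy.dx).add fxt.yxt).congr ?_) (ftt.yxt.congr ?_) <;>
      intro v hv p <;> have s := hv.sm
    · rw [pdx_mul hy s.dt.dx, pdt_pdx s]
    · rw [pdt_mul hy s.dt.dx, pdt_pow, pdt_pdx s.dt]; ring
    · rw [dmul_xx hy s.dt.dx, pdt_pdx s.dx, pdt_pdx s]
    · rw [dmul_xt hy s.dt.dx, pdt_pow, pdx_zero, pdt_pdx s.dt]; ring
    · rw [dmul_tt hy s.dt.dx, pdt_pow, pdt_zero, pdt_pdx s.dt, pdt_pdx s.dt.dt]; ring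
  have hm := Sm_pow m
  have W3 : DomH U (fun v p => p.1 ^ m * pdt v p) (Rs m a b) := by
    refine DomH.mk6 f0.t (((H0.dt.mul hU hm.dx).add fx.t).congr ?_) (ft.t.congr ?_)
      (((H0.dt.mul hU hm.dx.dx).add ((H0.dxt.mul hU ((Sm.cst 2).mul hm.dx)).add fxx.t)).congr ?_)
      (((H0.dtt.mul hU hm.dx).add fxt.t).congr ?_) (ftt.t.congr ?_) <;>
      intro v hv p <;> have s := hv.sm
    · rw [pdx_mul hm s.dt, pdt_pdx s]
    · rw [pdt_mul hm s.dt, pdt_pow]; ring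
    · rw [dmul_xx hm s.dt, pdt_pdx s.dx, pdt_pdx s]
    · rw [dmul_xt hm s.dt, pdt_pow, pdx_zero, pdt_pdx s.dt]; ring
    · rw [dmul_tt hm s.dt, pdt_pow, pdt_zero]; ring
  have h2 := Sm_pow (2 * m + 2)
  have W4 : DomH U (fun v p => p.1 ^ (2 * m + 2) * pdt (pdt v) p) (Rs m a b) := by
    refine DomH.mk6 f0.yytt (((H0.dtt.mul hU h2.dx).add fx.yytt).congr ?_) (ft.yytt.congr ?_)
      (((H0.dtt.mul hU h2.dx.dx).add ((b12.mul hU ((Sm.cst 2).mul h2.dx)).add fxx.yytt)).congr ?_)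
      (((y03.mul hU ((Sm.cst (2 * (m : ℝ) + 2)).mul hm)).add fxt.yytt).congr ?_)
      (ftt.yytt.congr ?_) <;>
      intro v hv p <;> have s := hv.sm
    · rw [pdx_mul h2 s.dt.dt, pdt_pdx s, pdt_pdx s.dt]
    · rw [pdt_mul h2 s.dt.dt, pdt_pow]; ring
    · rw [dmul_xx h2 s.dt.dt, pdt_pdx s.dx, pdt_pdx s, pdt_pdx s.dt.dx, pdt_pdx s.dt]
    · rw [dmul_xt h2 s.dt.dt, pdt_pow, pdx_zero, pdt_pdx s.dt, pdt_pdx s.dt.dt,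
        show 2 * m + 2 = (2 * m + 1) + 1 from rfl, pdx_pow]
      push_cast; ring
    · rw [dmul_tt h2 s.dt.dt, pdt_pow, pdt_zero]; ring
  have V2 : DomH U (fun v => pdx (Y m v)) (Rs m a b) :=
    ((W3.mul hU (Sm.cst ((m : ℝ) + 1))).add W2).congr fun v hv p => by rw [xY_eq m hv.sm]
  have V3 : DomH U (fun v => Y m (pdx v)) (Rs m a b) :=
    W2.congr fun v hv p => by rw [Yx_eq m hv.sm]
  have V4 : DomH U (fun v => Y m (Y m v)) (Rs m a b) :=
    W4.congr fun v hv p => by rw [YY_eq m hv.sm]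
  obtain ⟨C1, c1, k1⟩ := W1
  obtain ⟨C2, c2, k2⟩ := V2
  obtain ⟨C3, c3, k3⟩ := V3
  obtain ⟨C4, c4, k4⟩ := V4
  refine ⟨C1 + C2 + C3 + C4, by positivity, fun v hv => ?_⟩
  have := (k1 v hv).2
  have := (k2 v hv).2
  have := (k3 v hv).2
  have := (k4 v hv).2
  unfold S2s
  linarith

end commute

/-! ### Interpolation -/

noncomputable def Ms (m : ℕ) (v : ℝ × ℝ → ℝ) : ℝ := S2s m v + Ls m v

theorem Ms_nonneg (m v) : 0 ≤ Ms m v := by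
  unfold Ms; linarith [(S2s_le m v).2.2.2.2, (Ls_le m v).2.2.2]

theorem Ms_ge (m v) : Ls m v ≤ Ms m v := by
  unfold Ms; linarith [(S2s_le m v).2.2.2.2]

/-- functionals that are small relative to `Ms`, up to the L² norm -/
def SmallF (m : ℕ) (U : Set (ℝ × ℝ)) (q : (ℝ × ℝ → ℝ) → ℝ) : Prop :=
  ∀ ε > 0, ∃ C : ℝ, 0 ≤ C ∧ ∀ v, TF U v → q v ≤ ε * Ms m v + C * Nm v

theorem SmallF.trans {m U q q1} (h : ∀ ε > 0, ∃ C : ℝ, 0 ≤ C ∧ ∀ v, TF U v → q v ≤ ε * Ms m v + C * q1 v)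
    (h1 : SmallF m U q1) : SmallF m U q := by
  intro ε hε
  obtain ⟨C, hC, k⟩ := h (ε / 2) (by positivity)
  obtain ⟨D, hD, k1⟩ := h1 (ε / (2 * (C + 1))) (by positivity)
  refine ⟨C * D, by positivity, fun v hv => ?_⟩
  have e1 := k v hv
  have e2 := mul_le_mul_of_nonneg_left (k1 v hv) hC
  have e3 : C * (ε / (2 * (C + 1))) ≤ ε / 2 := by
    rw [mul_div_assoc', div_le_div_iff₀ (by positivity) (by positivity)]
    nlinarith
  have e4 := mul_le_mul_of_nonneg_right e3 (Ms_nonneg m v)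
  linarith

theorem SmallF.add {m U q q1} (h : SmallF m U q) (h1 : SmallF m U q1) :
    SmallF m U (fun v => q v + q1 v) := by
  intro ε hε
  obtain ⟨C, hC, k⟩ := h (ε / 2) (by positivity)
  obtain ⟨D, hD, k1⟩ := h1 (ε / 2) (by positivity)
  refine ⟨C + D, by positivity, fun v hv => ?_⟩
  have := k v hv
  have := k1 v hv
  show q v + q1 v ≤ _
  linarith

theorem SmallF.geo {m U} {F G H : (ℝ × ℝ → ℝ) → (ℝ × ℝ → ℝ)} (hG : SmallF m U (fun v => Nm (G v))) (hH : Dom U H (Ms m))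
    (h : ∀ v, TF U v → Nm (F v) ^ 2 ≤ Nm (G v) * Nm (H v)) : SmallF m U (fun v => Nm (F v)) := by
  obtain ⟨D, hD, k⟩ := hH
  refine SmallF.trans (q1 := fun v => Nm (G v)) (fun ε hε => ?_) hG
  set δ := ε / (D + 1) with hδ
  have hδ0 : 0 < δ := by positivity
  refine ⟨1 / δ, by positivity, fun v hv => ?_⟩
  have e1 := h v hv
  have e2 := (k v hv).2
  have n1 := Nm_nonneg (G v)
  have n2 := Nm_nonneg (H v)
  have n3 := Ms_nonneg m v
  have e3 : Nm (F v) ≤ δ * Nm (H v) + 1 / δ * Nm (G v) := by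
    apply le_of_sq_le_sq _ (by positivity)
    refine e1.trans ?_
    have : (δ * Nm (H v)) * (1 / δ * Nm (G v)) = Nm (G v) * Nm (H v) := by field_simp
    nlinarith [sq_nonneg (δ * Nm (H v)), sq_nonneg (1 / δ * Nm (G v)), mul_nonneg n1 n2]
  have e4 : δ * Nm (H v) ≤ ε * Ms m v := by
    have h1 := mul_le_mul_of_nonneg_left e2 hδ0.le
    have h2 : δ * D ≤ ε := by
      rw [hδ, div_mul_eq_mul_div, div_le_iff₀ (by positivity)]; nlinarith
    have h3 := mul_le_mul_of_nonneg_right h2 n3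
    linarith
  linarith

theorem interp_x {w : ℝ × ℝ → ℝ} (hw : CS w) : Nm (pdx w) ^ 2 ≤ Nm w * Nm (pdx (pdx w)) := by
  have h := ibp_x hw.sm.dx hw
  have c := CS.cauchy hw hw.dx.dx
  rw [Nm_sq]
  have e1 : ∫ p, pdx w p ^ 2 = ∫ p, pdx w p * pdx w p := by
    congr 1; funext p; ring
  have e2 : ∫ p, pdx (pdx w) p * w p = ∫ p, w p * pdx (pdx w) p := by
    congr 1; funext p; ring
  rw [e1, h, e2]
  exact (neg_le_abs _).trans c

theorem interp_t (m : ℕ) {w : ℝ × ℝ → ℝ} (hw : CS w) : Nm (fun p => p.1 ^ (m + 1) * pdt w p) ^ 2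
    ≤ Nm w * Nm (fun p => p.1 ^ (2 * m + 2) * pdt (pdt w) p) := by
  have hp := Sm_pow (2 * m + 2)
  have h := ibp_t (hp.mul hw.sm.dt) hw
  have c := CS.cauchy hw (CS.mul_left hp hw.dt.dt)
  rw [Nm_sq]
  have e1 : ∫ p : ℝ × ℝ, (p.1 ^ (m + 1) * pdt w p) ^ 2
      = ∫ p : ℝ × ℝ, (p.1 ^ (2 * m + 2) * pdt w p) * pdt w p := by
    congr 1; funext p; ring
  have e2 : ∫ p, pdt (fun p => p.1 ^ (2 * m + 2) * pdt w p) p * w p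
      = ∫ p : ℝ × ℝ, w p * (p.1 ^ (2 * m + 2) * pdt (pdt w) p) := by
    congr 1; funext p; rw [pdt_mul hp hw.sm.dt, pdt_pow]; ring
  rw [e1, h, e2]
  exact (neg_le_abs _).trans c

theorem poincare (m : ℕ) {ρ : ℝ} (hρ : 0 < ρ) : ∃ C : ℝ, 0 ≤ C ∧ ∀ f, CS f →
    Nm f ≤ (2 * ρ) * Nm (pdx f) + C * Nm (fun p => p.1 ^ (m + 1) * f p) := by
  set k : ℝ := 2 ^ m / ρ ^ (2 * m + 2) with hk
  have hk0 : 0 ≤ k := by positivity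
  refine ⟨Real.sqrt (2 * k), Real.sqrt_nonneg _, fun f hf => ?_⟩
  have n1 := Nm_nonneg (pdx f)
  have n2 := Nm_nonneg (fun p => p.1 ^ (m + 1) * f p)
  have hX : Sm (fun p : ℝ × ℝ => p.1 ^ (0 + 1)) := Sm_pow (0 + 1)
  have cΦ : CS (fun p => p.1 ^ (0 + 1) * (f p * f p)) := CS.mul_left hX (hf.mul hf)
  have eΦ : pdx (fun p => p.1 ^ (0 + 1) * (f p * f p))
      = fun p => f p ^ 2 + 2 * (p.1 * f p * pdx f p) := by
    rw [pdx_mul hX (hf.sm.mul hf.sm), pdx_mul hf.sm hf.sm, pdx_pow]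
    funext p; push_cast; ring
  have cy := CS.mul_left (Sm_pow (m + 1)) hf
  have pw : ∀ p : ℝ × ℝ, f p ^ 2 ≤ 2 * pdx (fun p => p.1 ^ (0 + 1) * (f p * f p)) p
      + ((2 * k) * (p.1 ^ (m + 1) * f p) ^ 2 + (2 * ρ ^ 2) * pdx f p ^ 2) := by
    intro p
    rw [eΦ]
    set x := p.1
    have hs : (x / ρ) ^ 2 ≤ 1 / 2 + k * (x ^ (m + 1)) ^ 2 := by
      have e : k * (x ^ (m + 1)) ^ 2 = 2 ^ m * ((x / ρ) ^ 2) ^ m * (x / ρ) ^ 2 := by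
        rw [hk, div_pow, div_pow]; field_simp; ring
      rw [e]
      have h0 : 0 ≤ (x / ρ) ^ 2 := sq_nonneg _
      set s := (x / ρ) ^ 2
      rcases le_total s (1 / 2) with h | h
      · have : 0 ≤ 2 ^ m * s ^ m * s := by positivity
        linarith
      · have : 1 ≤ 2 ^ m * s ^ m := by
          rw [← mul_pow]; exact one_le_pow₀ (by linarith)
        nlinarith
    have h1 := mul_le_mul_of_nonneg_right hs (sq_nonneg (f p))
    have h2 := sq_nonneg ((x / ρ) * f p + ρ * pdx f p)
    have h3 : (x / ρ) * f p * (ρ * pdx f p) = x * f p * pdx f p := by field_simp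
    nlinarith
  have i1 := cΦ.dx.int.const_mul 2
  have i2 := cy.sqint.const_mul (2 * k)
  have i3 := hf.dx.sqint.const_mul (2 * ρ ^ 2)
  have main := integral_mono hf.sqint (i1.add (i2.add i3)) pw
  have e := integral_add3 i1 i2 i3
  have main2 := main.trans (le_of_eq e)
  rw [integral_const_mul, integral_const_mul, integral_const_mul, cΦ.idx, ← Nm_sq, ← Nm_sq, ← Nm_sq]
    at main2
  apply le_of_sq_le_sq _ (by positivity)
  have e5 : ((2 * ρ) * Nm (pdx f) + Real.sqrt (2 * k) * Nm (fun p => p.1 ^ (m + 1) * f p)) ^ 2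
      = 4 * ρ ^ 2 * Nm (pdx f) ^ 2 + 4 * ρ * Nm (pdx f) * (Real.sqrt (2 * k)
        * Nm (fun p => p.1 ^ (m + 1) * f p))
        + (2 * k) * Nm (fun p => p.1 ^ (m + 1) * f p) ^ 2 := by
    have := Real.sq_sqrt (by positivity : 0 ≤ 2 * k)
    calc _ = 4 * ρ ^ 2 * Nm (pdx f) ^ 2 + 4 * ρ * Nm (pdx f) * (Real.sqrt (2 * k)
        * Nm (fun p => p.1 ^ (m + 1) * f p))
        + (Real.sqrt (2 * k)) ^ 2 * Nm (fun p => p.1 ^ (m + 1) * f p) ^ 2 := by ring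
      _ = _ := by rw [this]
  rw [e5]
  have q1 : 0 ≤ 4 * ρ * Nm (pdx f) * (Real.sqrt (2 * k) * Nm (fun p => p.1 ^ (m + 1) * f p)) := by
    positivity
  have q2 : 0 ≤ ρ ^ 2 * Nm (pdx f) ^ 2 := by positivity
  linarith

theorem SmallF.sx {m U} {F : (ℝ × ℝ → ℝ) → (ℝ × ℝ → ℝ)} (hF : SmallF m U (fun v => Nm (F v))) (hT : ∀ v, TF U v → TF U (F v))
    (h : Dom U (fun v => pdx (pdx (F v))) (Ms m)) : SmallF m U (fun v => Nm (pdx (F v))) :=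
  SmallF.geo hF h fun v hv => interp_x (hT v hv).toCS

theorem SmallF.st {m U} {F : (ℝ × ℝ → ℝ) → (ℝ × ℝ → ℝ)} (hF : SmallF m U (fun v => Nm (F v))) (hT : ∀ v, TF U v → TF U (F v))
    (h : Dom U (fun v p => p.1 ^ (2 * m + 2) * pdt (pdt (F v)) p) (Ms m)) :
    SmallF m U (fun v => Nm (fun p => p.1 ^ (m + 1) * pdt (F v) p)) :=
  SmallF.geo hF h fun v hv => interp_t m (hT v hv).toCS

theorem SmallF.po {m U} {F : (ℝ × ℝ → ℝ) → (ℝ × ℝ → ℝ)} (hF : SmallF m U (fun v => Nm (fun p => p.1 ^ (m + 1) * F v p)))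
    (hT : ∀ v, TF U v → TF U (F v))
    (h : Dom U (fun v => pdx (F v)) (Ms m)) : SmallF m U (fun v => Nm (F v)) := by
  obtain ⟨D, hD, k⟩ := h
  refine SmallF.trans (fun ε hε => ?_) hF
  obtain ⟨C, hC, hp⟩ := poincare m (ρ := ε / (2 * (D + 1))) (by positivity)
  refine ⟨C, hC, fun v hv => ?_⟩
  have h1 := hp _ (hT v hv).toCS
  have h2 := (k v hv).2
  have n3 := Ms_nonneg m v
  have h3 : 2 * (ε / (2 * (D + 1))) * Nm (pdx (F v)) ≤ ε * Ms m v := by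
    have h4 := mul_le_mul_of_nonneg_left h2 (by positivity : 0 ≤ 2 * (ε / (2 * (D + 1))))
    have h5 : 2 * (ε / (2 * (D + 1))) * D ≤ ε := by
      have : 2 * (ε / (2 * (D + 1))) * D = ε * D / (D + 1) := by field_simp
      rw [this, div_le_iff₀ (by positivity)]; nlinarith
    have h6 := mul_le_mul_of_nonneg_right h5 n3
    linarith
  linarith

theorem SmallF.congr {m U} {F G : (ℝ × ℝ → ℝ) → (ℝ × ℝ → ℝ)} (h : SmallF m U (fun v => Nm (F v)))
    (e : ∀ v, TF U v → ∀ p, G v p = F v p) : SmallF m U (fun v => Nm (G v)) := by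
  intro ε hε
  obtain ⟨C, hC, k⟩ := h ε hε
  refine ⟨C, hC, fun v hv => ?_⟩
  have : G v = F v := funext (e v hv)
  show Nm (G v) ≤ _
  rw [this]; exact k v hv

theorem Ls_small (m : ℕ) (U : Set (ℝ × ℝ)) : SmallF m U (Ls m) := by
  have hR := Ms_ge m
  have H0 := atH0 (U := U) hR
  have H1 := atH1 (U := U) hR
  have HY := atHY (U := U) hR
  have b21 := at21 (U := U) hR
  have b12 := at12 (U := U) hR
  have hS : ∀ v, S2s m v ≤ Ms m v := fun v => by unfold Ms; linarith [(Ls_le m v).2.2.2]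
  have Wxx : DomH U (fun v => pdx (pdx v)) (Ms m) :=
    DomH.of_le (fun v hv => hv.dx.dx) fun v _ => (S2s_le m v).1.trans (hS v)
  have WxY : DomH U (fun v => pdx (Y m v)) (Ms m) :=
    DomH.of_le (fun v hv => (hv.Y m).dx) fun v _ => (S2s_le m v).2.1.trans (hS v)
  have WYY0 : DomH U (fun v => Y m (Y m v)) (Ms m) :=
    DomH.of_le (fun v hv => (hv.Y m).Y m) fun v _ => (S2s_le m v).2.2.2.1.trans (hS v)
  have WYY : DomH U (fun v p => p.1 ^ (2 * m + 2) * pdt (pdt v) p) (Ms m) :=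
    WYY0.congr fun v hv p => by rw [YY_eq m hv.sm]
  have h2 := Sm_pow (2 * m + 2)
  have hy := Sm_pow (m + 1)
  have s0 : SmallF m U (fun v => Nm v) := fun ε hε => ⟨1, zero_le_one, fun v hv => by
    have := mul_nonneg hε.le (Ms_nonneg m v)
    show Nm v ≤ _
    linarith⟩
  have f0 : SmallF m U (fun v => Nm (fun p => p.1 ^ (m + 1) * pdt v p)) :=
    s0.st (F := fun v => v) (fun v hv => hv) WYY.d0
  have s01 : SmallF m U (fun v => Nm (pdt v)) :=
    SmallF.po (F := fun v => pdt v) f0 (fun v hv => hv.dt) H0.dxt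
  have f1 : SmallF m U (fun v => Nm (fun p => p.1 ^ (m + 1) * pdt (pdt v) p)) :=
    s01.st (F := fun v => pdt v) (fun v hv => hv.dt) (WYY.dt.congr fun v hv p => by
      rw [pdt_mul h2 hv.sm.dt.dt, pdt_pow]; ring)
  have s02 : SmallF m U (fun v => Nm (pdt (pdt v))) :=
    SmallF.po (F := fun v => pdt (pdt v)) f1 (fun v hv => hv.dt.dt) b12
  have f2 : SmallF m U (fun v => Nm (fun p => p.1 ^ (m + 1) * pdt (pdt (pdt v)) p)) :=
    s02.st (F := fun v => pdt (pdt v)) (fun v hv => hv.dt.dt) (WYY.dtt.congr fun v hv p => by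
      rw [dmul_tt h2 hv.sm.dt.dt, pdt_pow, pdt_zero]; ring)
  have s10 : SmallF m U (fun v => Nm (pdx v)) :=
    s0.sx (F := fun v => v) (fun v hv => hv) H0.dxx
  have s11 : SmallF m U (fun v => Nm (pdx (pdt v))) :=
    s01.sx (F := fun v => pdt v) (fun v hv => hv.dt) b21
  have s20 : SmallF m U (fun v => Nm (pdx (pdx v))) :=
    s10.sx (F := fun v => pdx v) (fun v hv => hv.dx) H1.dxx
  have s30 : SmallF m U (fun v => Nm (pdx (pdx (pdx v)))) :=
    s20.sx (F := fun v => pdx (pdx v)) (fun v hv => hv.dx.dx) Wxx.dxx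
  have s21 : SmallF m U (fun v => Nm (pdx (pdx (pdt v)))) :=
    s11.sx (F := fun v => pdx (pdt v)) (fun v hv => hv.dt.dx) (Wxx.dxt.congr fun v hv p => by
      rw [pdt_pdx hv.sm.dx, pdt_pdx hv.sm])
  have s12 : SmallF m U (fun v => Nm (pdx (pdt (pdt v)))) :=
    s02.sx (F := fun v => pdt (pdt v)) (fun v hv => hv.dt.dt) (Wxx.dtt.congr fun v hv p => by
      rw [pdt_pdx hv.sm.dx, pdt_pdx hv.sm, pdt_pdx hv.sm.dt.dx, pdt_pdx hv.sm.dt])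
  have g0 : SmallF m U (fun v => Nm (Y m v)) := f0
  have gt : SmallF m U (fun v => Nm (pdt (Y m v))) := f1.congr fun v hv p => by
    unfold Y; rw [pdt_mul hy hv.sm.dt, pdt_pow]; ring
  have gtt : SmallF m U (fun v => Nm (pdt (pdt (Y m v)))) := f2.congr fun v hv p => by
    unfold Y; rw [dmul_tt hy hv.sm.dt, pdt_pow, pdt_zero]; ring
  have gx : SmallF m U (fun v => Nm (pdx (Y m v))) :=
    g0.sx (F := fun v => Y m v) (fun v hv => hv.Y m) HY.dxx
  have gxt : SmallF m U (fun v => Nm (pdx (pdt (Y m v)))) :=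
    gt.sx (F := fun v => pdt (Y m v)) (fun v hv => (hv.Y m).dt) (WxY.dxt.congr fun v hv p => by
      rw [pdt_pdx (hv.Y m).sm])
  have gxx : SmallF m U (fun v => Nm (pdx (pdx (Y m v)))) :=
    gx.sx (F := fun v => pdx (Y m v)) (fun v hv => (hv.Y m).dx) WxY.dxx
  have t11 : SmallF m U (fun v => Nm (pdt (pdx v))) :=
    s11.congr fun v hv p => by rw [pdt_pdx hv.sm]
  have t21 : SmallF m U (fun v => Nm (pdx (pdt (pdx v)))) :=
    s21.congr fun v hv p => by rw [pdt_pdx hv.sm]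
  have t12 : SmallF m U (fun v => Nm (pdt (pdt (pdx v)))) :=
    s12.congr fun v hv p => by rw [pdt_pdx hv.sm, pdt_pdx hv.sm.dt]
  have a1 := ((((s0.add s10).add s01).add s20).add s11).add s02
  have a2 := ((((s10.add s20).add t11).add s30).add t21).add t12
  have a3 := ((((g0.add gx).add gt).add gxx).add gxt).add gtt
  exact (a1.add a2).add a3

/-! ### Comparison with the Sobolev norms -/

theorem sob0 (v : ℝ × ℝ → ℝ) : sobolevNorm 0 v = Nm v := by
  have : multiIdx 0 = {((0 : ℕ), (0 : ℕ))} := by decide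
  unfold sobolevNorm Nm
  rw [this]; simp [pderiv2]

theorem sob2 (v : ℝ × ℝ → ℝ) : sobolevNorm 2 v = Real.sqrt (Nm v ^ 2 + Nm (pdx v) ^ 2
    + Nm (pdt v) ^ 2 + Nm (pdx (pdx v)) ^ 2 + Nm (pdx (pdt v)) ^ 2 + Nm (pdt (pdt v)) ^ 2) := by
  have : multiIdx 2 = {((0 : ℕ), (0 : ℕ)), (1, 0), (0, 1), (2, 0), (1, 1), (0, 2)} := by decide
  unfold sobolevNorm
  rw [this]
  congr 1
  simp only [Nm_sq]
  rw [Finset.sum_insert (by decide), Finset.sum_insert (by decide), Finset.sum_insert (by decide),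
    Finset.sum_insert (by decide), Finset.sum_insert (by decide), Finset.sum_singleton]
  simp only [pderiv2, L2normSq, Function.iterate_succ, Function.iterate_zero, Function.comp, id]
  ring

theorem sob_le (v : ℝ × ℝ → ℝ) : sobolevNorm 2 v ≤ H2s v := by
  rw [sob2, Real.sqrt_le_left (H2s_le v).2.2.2.2.2.2]
  have h0 := Nm_nonneg v
  have h1 := Nm_nonneg (pdx v)
  have h2 := Nm_nonneg (pdt v)
  have h3 := Nm_nonneg (pdx (pdx v))
  have h4 := Nm_nonneg (pdx (pdt v))
  have h5 := Nm_nonneg (pdt (pdt v))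
  have ab : ∀ x y : ℝ, 0 ≤ x → 0 ≤ y → x ^ 2 + y ^ 2 ≤ (x + y) ^ 2 := by
    intro x y hx hy; nlinarith [mul_nonneg hx hy]
  unfold H2s
  have e1 := ab _ _ h0 h1
  have e2 := ab _ _ (add_nonneg h0 h1) h2
  have e3 := ab _ _ (add_nonneg (add_nonneg h0 h1) h2) h3
  have e4 := ab _ _ (add_nonneg (add_nonneg (add_nonneg h0 h1) h2) h3) h4
  have e5 := ab _ _ (add_nonneg (add_nonneg (add_nonneg (add_nonneg h0 h1) h2) h3) h4) h5
  linarith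

theorem le_sob (v : ℝ × ℝ → ℝ) : H2s v ≤ 6 * sobolevNorm 2 v := by
  rw [sob2]
  have h0 := sq_nonneg (Nm v)
  have h1 := sq_nonneg (Nm (pdx v))
  have h2 := sq_nonneg (Nm (pdt v))
  have h3 := sq_nonneg (Nm (pdx (pdx v)))
  have h4 := sq_nonneg (Nm (pdx (pdt v)))
  have h5 := sq_nonneg (Nm (pdt (pdt v)))
  set T := Nm v ^ 2 + Nm (pdx v) ^ 2
    + Nm (pdt v) ^ 2 + Nm (pdx (pdx v)) ^ 2 + Nm (pdx (pdt v)) ^ 2 + Nm (pdt (pdt v)) ^ 2 with hT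
  have k : ∀ x : ℝ, x ^ 2 ≤ T → x ≤ Real.sqrt T := fun x hx => Real.le_sqrt_of_sq_le hx
  have e0 := k (Nm v) (by linarith)
  have e1 := k (Nm (pdx v)) (by linarith)
  have e2 := k (Nm (pdt v)) (by linarith)
  have e3 := k (Nm (pdx (pdx v))) (by linarith)
  have e4 := k (Nm (pdx (pdt v))) (by linarith)
  have e5 := k (Nm (pdt (pdt v))) (by linarith)
  unfold H2s
  linarith

/-! ### Assembly -/

theorem DomH.sob {U F Q} (h : DomH U F Q) :
    ∃ C : ℝ, 0 ≤ C ∧ ∀ v, TF U v → sobolevNorm 2 (F v) ≤ C * Q v := by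
  obtain ⟨C, hC, k⟩ := h
  exact ⟨C, hC, fun v hv => (sob_le _).trans (k v hv).2⟩

theorem sum_bound {ι : Type} [Fintype ι] {U : Set (ℝ × ℝ)} {q : ι → (ℝ × ℝ → ℝ) → ℝ}
    {Q : (ℝ × ℝ → ℝ) → ℝ} (h : ∀ i, ∃ C : ℝ, 0 ≤ C ∧ ∀ v, TF U v → q i v ≤ C * Q v) :
    ∃ C : ℝ, 0 ≤ C ∧ ∀ v, TF U v → ∑ i, q i v ≤ C * Q v := by
  choose C hC k using h
  refine ⟨∑ i, C i, Finset.sum_nonneg fun i _ => hC i, fun v hv => ?_⟩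
  rw [Finset.sum_mul]
  exact Finset.sum_le_sum fun i _ => k i v hv

theorem words1 {m : ℕ} {U : Set (ℝ × ℝ)} (hU : Bornology.IsBounded U) {h : ℝ × ℝ × ℝ → ℝ}
    {u g : ℝ × ℝ → ℝ} (hg : Sm g) (eg : ∀ p : ℝ × ℝ, h (p.1, p.2, u p) = g p)
    {Q : (ℝ × ℝ → ℝ) → ℝ} (hQ : ∀ v, Ls m v ≤ Q v) (i : Fin 3) :
    DomH U (fun v => Xvf (m + 1) h u i v) Q := by
  fin_cases i
  · exact atH1 hQ
  · exact atHY hQ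
  · refine ((atHY hQ).mul hU hg).congr fun v hv p => ?_
    simp only [Xvf, Y, eg]; ring

theorem words2 {m : ℕ} {U : Set (ℝ × ℝ)} (hU : Bornology.IsBounded U) {h : ℝ × ℝ × ℝ → ℝ}
    {u g : ℝ × ℝ → ℝ} (hg : Sm g) (eg : ∀ p : ℝ × ℝ, h (p.1, p.2, u p) = g p) (i j : Fin 3) :
    DomH U (fun v => Xvf (m + 1) h u i (Xvf (m + 1) h u j v)) (Ms m) := by
  have hR := Ms_ge m
  have HY := atHY (U := U) hR
  have hS : ∀ v, S2s m v ≤ Ms m v := fun v => by unfold Ms; linarith [(Ls_le m v).2.2.2]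
  have Wxx : DomH U (fun v => pdx (pdx v)) (Ms m) :=
    DomH.of_le (fun v hv => hv.dx.dx) fun v _ => (S2s_le m v).1.trans (hS v)
  have WxY : DomH U (fun v => pdx (Y m v)) (Ms m) :=
    DomH.of_le (fun v hv => (hv.Y m).dx) fun v _ => (S2s_le m v).2.1.trans (hS v)
  have WYx : DomH U (fun v => Y m (pdx v)) (Ms m) :=
    DomH.of_le (fun v hv => hv.dx.Y m) fun v _ => (S2s_le m v).2.2.1.trans (hS v)
  have WYY : DomH U (fun v => Y m (Y m v)) (Ms m) :=
    DomH.of_le (fun v hv => (hv.Y m).Y m) fun v _ => (S2s_le m v).2.2.2.1.trans (hS v)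
  have e3 : ∀ v, Xvf (m + 1) h u 2 v = fun p => g p * Y m v p := by
    intro v; funext p; simp only [Xvf, Y, eg]; ring
  have WxZ : DomH U (fun v => pdx (fun p => g p * Y m v p)) (Ms m) :=
    ((HY.mul hU hg.dx).add (WxY.mul hU hg)).congr fun v hv p => by
      rw [pdx_mul hg (hv.Y m).sm]
  have WYZ : DomH U (fun v => Y m (fun p => g p * Y m v p)) (Ms m) :=
    ((HY.mul hU ((Sm_pow (m + 1)).mul hg.dt)).add (WYY.mul hU hg)).congr fun v hv p => by
      show p.1 ^ (m + 1) * pdt (fun p => g p * Y m v p) p = _ + g p * (p.1 ^ (m + 1) * pdt (Y m v) p)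
      rw [pdt_mul hg (hv.Y m).sm]; ring
  have all : ∀ j : Fin 3, DomH U (fun v => pdx (Xvf (m + 1) h u j v)) (Ms m) ∧
      DomH U (fun v => Y m (Xvf (m + 1) h u j v)) (Ms m) := by
    intro j
    fin_cases j
    · exact ⟨Wxx, WYx⟩
    · exact ⟨WxY, WYY⟩
    · exact ⟨WxZ.congr fun v hv p => by rw [← e3]; rfl, WYZ.congr fun v hv p => by rw [← e3]; rfl⟩
  fin_cases i
  · exact (all j).1
  · exact (all j).2
  · refine ((all j).2.mul hU hg).congr fun v hv p => ?_
    exact congrFun (e3 _) p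

theorem Pop_eq {m : ℕ} {h : ℝ × ℝ × ℝ → ℝ}
    {u g : ℝ × ℝ → ℝ} (hg : Sm g) (eg : ∀ p : ℝ × ℝ, h (p.1, p.2, u p) = g p)
    {v : ℝ × ℝ → ℝ} (hv : Sm v) : Pop (m + 1) h u v =
      Plin m (fun p => 1 + g p * g p) (fun p => p.1 ^ (m + 1) * (g p * pdt g p)) v := by
  have hy : Sm (Y m v) := (Sm_pow _).mul hv.dt
  have e3 : ∀ v, Xvf (m + 1) h u 2 v = fun p => g p * Y m v p := by
    intro v; funext p; simp only [Xvf, Y, eg]; ring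
  have e2 : ∀ v, Xvf (m + 1) h u 1 v = Y m v := fun v => rfl
  have e1 : ∀ v, Xvf (m + 1) h u 0 v = pdx v := fun v => rfl
  have e4 : Y m (fun p => g p * Y m v p) = fun p => p.1 ^ (m + 1) * pdt g p * Y m v p
      + g p * Y m (Y m v) p := by
    funext p
    show p.1 ^ (m + 1) * pdt (fun p => g p * Y m v p) p = _ + g p * (p.1 ^ (m + 1) * pdt (Y m v) p)
    rw [pdt_mul hg hy]; ring
  funext p
  simp only [Pop, e1, e2, e3, e4, YY_eq m hv, Plin]
  simp only [Y]
  ring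

/-- for a constant C (independent of K) and constants C_K,
Σ_{|I|≤2} ‖X^I v‖_{H²} + K Σ_{|I|≤1} ‖X^I v‖_{H²} ≤ C‖P_u v‖_{H²} + C_K ‖v‖_{L²}.
The words of length ≤ 2 in the letters {1,2,3} are the empty word, the words i,
and the words ij, giving the sums below. -/
theorem apriori_estimate_max
    (r : ℕ) (hr : 0 < r) (h : ℝ × ℝ × ℝ → ℝ) (hh : AnalyticOnNhd ℝ h Set.univ)
    (u : ℝ × ℝ → ℝ) (hu : ContDiff ℝ (⊤ : ℕ∞) u)
    (𝒰 : Set (ℝ × ℝ)) (h𝒰 : IsOpen 𝒰) (hb : Bornology.IsBounded 𝒰) :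
    ∃ C > 0, ∀ K > (0 : ℝ), ∃ CK > 0, ∀ v : ℝ × ℝ → ℝ,
      ContDiff ℝ (⊤ : ℕ∞) v → HasCompactSupport v → tsupport v ⊆ 𝒰 →
      (sobolevNorm 2 v + ∑ i : Fin 3, sobolevNorm 2 (Xvf r h u i v)
          + ∑ i : Fin 3, ∑ j : Fin 3, sobolevNorm 2 (Xvf r h u i (Xvf r h u j v)))
        + K * (sobolevNorm 2 v + ∑ i : Fin 3, sobolevNorm 2 (Xvf r h u i v)) ≤
        C * sobolevNorm 2 (Pop r h u v) + CK * sobolevNorm 0 v := by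
  obtain ⟨m, rfl⟩ : ∃ m, r = m + 1 := ⟨r - 1, by omega⟩
  set g : ℝ × ℝ → ℝ := fun p => h (p.1, p.2, u p) with hgdef
  have hg : Sm g := by
    have h1 : ContDiff ℝ (⊤ : ℕ∞) h := hh.contDiff
    exact h1.comp (contDiff_fst.prodMk (contDiff_snd.prodMk hu))
  have eg : ∀ p : ℝ × ℝ, h (p.1, p.2, u p) = g p := fun p => rfl
  have ha : Sm (fun p => 1 + g p * g p) := (Sm.cst 1).add (hg.mul hg)
  have hbb : Sm (fun p => p.1 ^ (m + 1) * (g p * pdt g p)) := (Sm_pow _).mul (hg.mul hg.dt)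
  have ha1 : ∀ p, 1 ≤ 1 + g p * g p := fun p => by nlinarith [mul_self_nonneg (g p)]
  obtain ⟨C1, hC1, hA⟩ := estA (m := m) hb ha hbb ha1
  obtain ⟨D1, hD1, k1⟩ := sum_bound (U := 𝒰) fun i =>
    (words1 (m := m) hb (h := h) (u := u) hg eg (Q := Ls m) (fun _ => le_rfl) i).sob
  obtain ⟨D2, hD2, k2⟩ := sum_bound (U := 𝒰) fun i => sum_bound (U := 𝒰) fun j =>
    (words2 (m := m) hb (h := h) (u := u) hg eg i j).sob
  set C3 : ℝ := 1 + D1 + D2 with hC3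
  have hC3' : 0 ≤ C3 := by positivity
  refine ⟨12 * C3 * C1 + 1, by positivity, fun K hK => ?_⟩
  obtain ⟨E, hE, kE⟩ := Ls_small m 𝒰 (1 / (2 * (C1 + 1 + K))) (by positivity)
  refine ⟨C3 * (2 * (C1 + 1 + K) * E) + 1, by positivity, fun v hv1 hv2 hv3 => ?_⟩
  have hv : TF 𝒰 v := ⟨⟨hv1, hv2⟩, hv3⟩
  have b1 := k1 v hv
  have b2 := k2 v hv
  have bA := hA v hv
  have bE := kE v hv
  have s0 := (sob_le v).trans (Ls_le m v).1
  have Ln := (Ls_le m v).2.2.2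
  have Mn := Ms_nonneg m v
  have ML := Ms_ge m v
  have Nn := Nm_nonneg v
  have pS := le_sob (Pop (m + 1) h u v)
  have pn : 0 ≤ sobolevNorm 2 (Pop (m + 1) h u v) := Real.sqrt_nonneg _
  rw [sob0]
  unfold Rs at bA
  rw [← Pop_eq hg eg hv1] at bA
  have hM : Ms m v = S2s m v + Ls m v := rfl
  set H := H2s (Pop (m + 1) h u v)
  set T := sobolevNorm 2 (Pop (m + 1) h u v)
  have c1 : (C1 + 1 + K) * Ls m v ≤ Ms m v / 2 + (C1 + 1 + K) * E * Nm v := by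
    have := mul_le_mul_of_nonneg_left bE (by positivity : 0 ≤ C1 + 1 + K)
    have e : (C1 + 1 + K) * (1 / (2 * (C1 + 1 + K)) * Ms m v + E * Nm v)
        = Ms m v / 2 + (C1 + 1 + K) * E * Nm v := by
      have : C1 + 1 + K ≠ 0 := by positivity
      field_simp
    rw [e] at this; exact this
  have KL : 0 ≤ K * Ls m v := by positivity
  have c2 : Ms m v + K * Ls m v ≤ 12 * C1 * T + 2 * (C1 + 1 + K) * E * Nm v := by
    have := mul_le_mul_of_nonneg_left pS hC1
    linarith
  have c3 : sobolevNorm 2 v + ∑ i : Fin 3, sobolevNorm 2 (Xvf (m + 1) h u i v)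
      ≤ (1 + D1) * Ls m v := by linarith
  have c4 := mul_le_mul_of_nonneg_left c3 hK.le
  have c5 := mul_le_mul_of_nonneg_left ML (by positivity : 0 ≤ 1 + D1)
  have c6 := mul_le_mul_of_nonneg_left c2 hC3'
  have c7 : 0 ≤ D2 * (K * Ls m v) := by positivity
  have c8 : C3 * (Ms m v + K * Ls m v) = (1 + D1) * Ms m v + D2 * Ms m v
      + K * ((1 + D1) * Ls m v) + D2 * (K * Ls m v) := by rw [hC3]; ring
  have c9 : C3 * (12 * C1 * T + 2 * (C1 + 1 + K) * E * Nm v)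
      = 12 * C3 * C1 * T + C3 * (2 * (C1 + 1 + K) * E) * Nm v := by ring
  linarith
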